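/- arXiv:1806.04451 — 2 statements merged into one kernel-verified Lean document; each statement's English description precedes it below -/
import Mathlib

section
/- Let G be a traceable simple graph on at most 17 vertices in which every vertex has degree 2 or 3. Suppose G has at least 2 vertices of degree 2, and for every cut vertex v of G, each connected component of G − v contains a vertex that has degree 2 in G. Then G has a hamiltonian path starting at a vertex of degree 2. -/
open SimpleGraph

/-- A graph is traceable if it has a hamiltonian path. -/
def IsTraceable {V : Type} (G : SimpleGraph V) : Prop :=
  ∃ (u v : V) (p : G.Walk u v), p.IsPath ∧ ∀ x : V, x ∈ p.support

namespace HamSearch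

/-- `if x = 0 then a else f x`, written so that kernel reduction evaluates `x` only once. -/
noncomputable def elim (x a : ℕ) (f : ℕ → ℕ) : ℕ :=
  Nat.rec (motive := fun _ => ℕ) a (fun y _ => f (Nat.succ y)) x

/-- The mask `m` with bit `i` toggled. -/
def toggle (m i : ℕ) : ℕ := Nat.xor m (Nat.pow 2 i)

/-- The neighbours of `v` inside the mask `av`; row `v` of the adjacency matrix `H` starts at
bit `32 * v`. -/
def row (H v av : ℕ) : ℕ := Nat.land (Nat.shiftRight H (Nat.mul 32 v)) av

/-- The mask `m` without its greatest `t` elements. -/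
noncomputable def dropBits (t : ℕ) : ℕ → ℕ :=
  Nat.rec (motive := fun _ => ℕ → ℕ) (fun m => m)
    (fun _ ih m => elim m 0 fun m => ih (toggle m (Nat.log2 m))) t

/-- A set of ends of paths which start at `v` and go through `k` further vertices of `av`. -/
noncomputable def ends (H k : ℕ) : ℕ → ℕ → ℕ :=
  Nat.rec (motive := fun _ => ℕ → ℕ → ℕ) (fun v _ => Nat.pow 2 v)
    (fun _ ih v av => elim (row H v av) 0 fun m =>
      Nat.lor (ih (Nat.log2 m) (toggle av (Nat.log2 m)))
        (elim (toggle m (Nat.log2 m)) 0 fun m' => ih (Nat.log2 m') (toggle av (Nat.log2 m')))) k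

/-- Update of the search result `acc` after hamiltonian paths from `u` to the vertices of `en`,
with final vertices `tail`, were found; `0` stands for a contradiction. -/
noncomputable def record (full t u ru tail en acc : ℕ) : ℕ :=
  elim (Nat.land tail ru)
    (elim (Nat.lor acc (Nat.lor (Nat.lor en (Nat.pow 2 u)) (Nat.shiftLeft tail 32))) 0 fun acc' =>
      elim (dropBits t (Nat.xor full (Nat.land acc' full))) 0 fun _ =>
        elim (Nat.xor full (Nat.shiftRight acc' 32)) 0 fun _ => acc')
    fun _ => 0

/-- Continue the search at `w`, leaving `x` behind; `e` tells whether the end of the path is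
already forced. -/
noncomputable def branch (H : ℕ) (ih : ℕ → ℕ → ℕ → ℕ → ℕ) (w x av e acc : ℕ) : ℕ :=
  elim (row H x av) acc fun y =>
    elim (Nat.land y (Nat.sub y 1))
      (elim e (ih w (toggle av w) 1 acc) fun _ => acc)
      fun _ => ih w (toggle av w) e acc

/-- One step of the search from `v` to its available neighbours. -/
noncomputable def extend (H : ℕ) (ih : ℕ → ℕ → ℕ → ℕ → ℕ) (v av e acc : ℕ) : ℕ :=
  elim (row H v av) acc fun m =>
    elim (toggle m (Nat.log2 m)) (ih (Nat.log2 m) (toggle av (Nat.log2 m)) e acc) fun m' =>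
      elim (branch H ih (Nat.log2 m) (Nat.log2 m') av e acc) 0
        (branch H ih (Nat.log2 m') (Nat.log2 m) av e)

/-- Search for hamiltonian paths from `u`, continuing at `v` with the vertices of `av`; the last
`R` vertices are treated by `ends`. -/
noncomputable def dfs (full t R H u ru k : ℕ) : ℕ → ℕ → ℕ → ℕ → ℕ :=
  Nat.rec (motive := fun _ => ℕ → ℕ → ℕ → ℕ → ℕ)
    (fun v av _ acc => elim (ends H R v av) acc fun en => record full t u ru av en acc)
    (fun _ => extend H) k

/-- Run `f` on the elements of `m`, threading the certificate `c`. -/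
noncomputable def loop (f : ℕ → ℕ → ℕ) (k : ℕ) : ℕ → ℕ → ℕ :=
  Nat.rec (motive := fun _ => ℕ → ℕ → ℕ) (fun _ _ => 0)
    (fun _ ih m c => elim m c fun m =>
      elim (f (Nat.log2 m) c) 0 fun c' => ih (toggle m (Nat.log2 m)) c') k

/-- The adjacency matrix of the edge `uw`. -/
def edge (u w : ℕ) : ℕ :=
  Nat.lor (Nat.pow 2 (Nat.add (Nat.mul 32 u) w)) (Nat.pow 2 (Nat.add (Nat.mul 32 w) u))

/-- Find what is known about the vertex `u`, then branch on its third neighbour. -/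
noncomputable def expand (full n t R : ℕ) (ih : ℕ → ℕ → ℕ → ℕ → ℕ) (H low S u c : ℕ) : ℕ :=
  elim (Nat.land (Nat.pow 2 u) (Nat.xor full S)) 0 fun _ =>
  elim (dfs full t R H u (row H u full) (Nat.sub (Nat.sub n 1) R) u (toggle full u) 0
    (Nat.lor low (Nat.shiftLeft (Nat.lor S (Nat.lor (row H u full) (Nat.pow 2 u))) 32))) c
    fun acc =>
  elim (Nat.land acc (Nat.pow 2 u)) 0 fun _ =>
  loop (fun w c => elim (Nat.lor H (edge u w)) 0 fun H' =>
    elim (Nat.lor (Nat.land acc full) (Nat.pow 2 w)) 0 fun low' =>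
    elim (Nat.lor S (Nat.lor (Nat.pow 2 u) (Nat.pow 2 w))) 0 fun S' => ih H' low' S' c)
    32 (Nat.xor full (Nat.shiftRight acc 32)) c

/-- The search tree; the certificate `c` tells which vertex to branch on. A nonzero value means that
every branch leads to a contradiction. -/
noncomputable def check (full n t R d : ℕ) : ℕ → ℕ → ℕ → ℕ → ℕ :=
  Nat.rec (motive := fun _ => ℕ → ℕ → ℕ → ℕ → ℕ) (fun _ _ _ _ => 0)
    (fun _ ih H low S c => elim (dropBits t (Nat.xor full (Nat.land low full))) c fun _ =>
      elim (Nat.div c 32) 0 (expand full n t R ih H low S (Nat.mod c 32))) d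

/-- The adjacency matrix of a list of edges. -/
def graph (es : List (ℕ × ℕ)) : ℕ := es.foldr (fun e H => Nat.lor (edge e.1 e.2) H) 0

/-- The mask of a list of vertices. -/
def mask (l : List ℕ) : ℕ := l.foldr (fun e H => Nat.lor (Nat.pow 2 e) H) 0

/-- The edges of the path `0, …, n - 1`. -/
def pathEdges (n : ℕ) : List (ℕ × ℕ) := (List.range (n - 1)).map fun i => (i, i + 1)

/-- The search starting from the path `0, …, n - 1` with the given chords. -/
noncomputable def run (n t R : ℕ) (chords : List (ℕ × ℕ)) (low S : List ℕ) (c : ℕ) : ℕ :=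
  elim (2 ^ n - 1) 0 fun full => elim (graph (pathEdges n ++ chords)) 0 fun H =>
    elim (mask low) 0 fun l => elim (mask S) 0 fun s => check full n t R 8 H l s c

/-- The search for a cycle `0, …, n - 2` and a further vertex `n - 1` with three neighbours. -/
noncomputable def runT (n a b c : ℕ) : ℕ :=
  run n (1 + n % 2) 1 [(0, n - 2), (a, n - 1), (a + 1 + b, n - 1)]
    [0, n - 1, n - 2, a, a + 1 + b] [n - 1, n - 2, a, a + 1 + b] c

/-- The search for a path with overlapping chords at its ends. -/
noncomputable def runR (n R k c : ℕ) : ℕ :=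
  run n (1 + n % 2) R [(0, n - 1 - R), (k, n - 1)] [0, n - 1, n - 1 - R, k] [n - 1 - R, k] c

/-- The search for a cycle `0, …, j - 1` with a pendant vertex `j` at `j - 1`. -/
noncomputable def runL (j c : ℕ) : ℕ :=
  run (j + 1) 0 1 [(0, j - 1)] [0, j - 1, j] [j - 1, j] c

theorem elim_zero (a : ℕ) (f : ℕ → ℕ) : elim 0 a f = a := rfl

theorem elim_of_ne {x : ℕ} (hx : x ≠ 0) (a : ℕ) (f : ℕ → ℕ) : elim x a f = f x := by
  cases x with
  | zero => exact absurd rfl hx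
  | succ y => rfl

/-- To prove a property of `elim x a f`, treat the two cases. -/
theorem elim_prop {p : ℕ → Prop} {x a : ℕ} {f : ℕ → ℕ} (h0 : x = 0 → p a) (h1 : x ≠ 0 → p (f x)) :
    p (elim x a f) := by
  by_cases hx : x = 0
  · subst hx; exact h0 rfl
  · rw [elim_of_ne hx]; exact h1 hx

theorem testBit_toggle (m i j : ℕ) :
    (toggle m i).testBit j = (m.testBit j ^^ decide (i = j)) := by
  change (m ^^^ 2 ^ i).testBit j = _
  rw [Nat.testBit_xor, Nat.testBit_two_pow]

theorem testBit_row (H v av j : ℕ) :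
    (row H v av).testBit j = (H.testBit (32 * v + j) && av.testBit j) := by
  change ((H >>> (32 * v)) &&& av).testBit j = _
  rw [Nat.testBit_and, Nat.testBit_shiftRight]

theorem testBit_edge {u w i j : ℕ} (hw : w < 32) (hu : u < 32) (hj : j < 32) :
    (edge u w).testBit (32 * i + j) = true ↔ i = u ∧ j = w ∨ i = w ∧ j = u := by
  change (2 ^ (32 * u + w) ||| 2 ^ (32 * w + u)).testBit (32 * i + j) = true ↔ _
  rw [Nat.testBit_or, Nat.testBit_two_pow, Nat.testBit_two_pow]
  simp only [Bool.or_eq_true, decide_eq_true_eq]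
  omega

theorem card_le_of_dropBits_eq_zero {t m : ℕ} (h : dropBits t m = 0) (F : Finset ℕ)
    (hF : ∀ f ∈ F, m.testBit f = true) : F.card ≤ t := by
  induction t generalizing m F with
  | zero =>
    have hm : m = 0 := h
    subst hm
    have : F = ∅ := Finset.eq_empty_of_forall_notMem fun f hf => by simpa using hF f hf
    simp [this]
  | succ t ih =>
    change elim m 0 (fun m => dropBits t (toggle m (Nat.log2 m))) = 0 at h
    by_cases hm : m = 0
    · have : F = ∅ := Finset.eq_empty_of_forall_notMem fun f hf => by simpa [hm] using hF f hf
      simp [this]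
    · rw [elim_of_ne hm] at h
      have := ih h (F.erase (Nat.log2 m)) fun f hf => by
        rw [Finset.mem_erase] at hf
        rw [testBit_toggle, hF f hf.2]
        simp [Ne.symm hf.1]
      have := Finset.pred_card_le_card_erase (s := F) (a := Nat.log2 m)
      omega

/-- `l` is a hamiltonian path of the graph `A` on `{0, …, n - 1}`. -/
structure HamList (n : ℕ) (A : ℕ → ℕ → Prop) (l : List ℕ) : Prop where
  nodup : l.Nodup
  length : l.length = n
  lt : ∀ i ∈ l, i < n
  chain : l.IsChain A

theorem HamList.mem {n : ℕ} {A : ℕ → ℕ → Prop} {l : List ℕ} (h : HamList n A l) {i : ℕ}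
    (hi : i < n) : i ∈ l := by
  have hsub : l.toFinset ⊆ Finset.range n := fun j hj => by
    simpa using h.lt j (by simpa using hj)
  have := Finset.eq_of_subset_of_card_le hsub (by
    rw [List.toFinset_card_of_nodup h.nodup, h.length, Finset.card_range])
  have hi' : i ∈ l.toFinset := by rw [this]; simpa using hi
  simpa using hi'

/-- A graph `A` on `{0, …, n - 1}` of maximum degree at most three in which more than `t`
vertices, those of `F`, have degree at most two, such that no hamiltonian path has an end in `F`
and the first vertex of a hamiltonian path has no neighbour among its last `R` vertices. The
vertex `x` is exempt. Hamiltonian paths are listed starting from their last vertex. -/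
structure Obstruction (n t R x : ℕ) (A : ℕ → ℕ → Prop) (F : Finset ℕ) : Prop where
  le : n ≤ 32
  symm : ∀ a b, A a b → A b a
  irrefl : ∀ a, ¬ A a a
  lt : ∀ a b, A a b → b < n
  le_three : ∀ v a b c d, A v a → A v b → A v c → A v d → a ≠ b → a ≠ c → b ≠ c →
    d = a ∨ d = b ∨ d = c
  card : t < F.card
  lt_of_mem : ∀ f ∈ F, f < n
  two : ∀ f ∈ F, ∀ a b c, A f a → A f b → A f c → a = b ∨ a = c ∨ b = c
  three : ∀ v < n, v ∉ F → v ≠ x → ∀ a b, ∃ c, A v c ∧ c ≠ a ∧ c ≠ b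
  path : ∀ q p u, HamList n A (q ++ p) → q.length = R → p.getLast? = some u → u ≠ x →
    u ∉ F ∧ (∀ w, (q ++ p).head? = some w → w ∉ F) ∧ ∀ d ∈ q, ¬ A u d

/-- The information `H`, `low`, `S` about the graph `A` is correct: `H` is a subgraph, `low`
avoids `F`, and the vertices of `S` have all their neighbours in `H`; the others have two there. -/
structure Consistent (n x : ℕ) (A : ℕ → ℕ → Prop) (F : Finset ℕ) (H low S : ℕ) : Prop where
  sub : ∀ i j, j < 32 → H.testBit (32 * i + j) = true → A i j
  symm : ∀ i < 32, ∀ j < 32, H.testBit (32 * i + j) = true → H.testBit (32 * j + i) = true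
  low : ∀ i, low.testBit i = true → i ∉ F ∧ i < n
  sat_lt : ∀ i, S.testBit i = true → i < n
  sat : ∀ i, S.testBit i = true → ∀ j, A i j → H.testBit (32 * i + j) = true
  unsat : ∀ i < n, S.testBit i = false → i ≠ x ∧
    ∃ a b, a ≠ b ∧ a < 32 ∧ b < 32 ∧ ∀ j < 32, H.testBit (32 * i + j) = true ↔ j = a ∨ j = b

/-- `p` is a path from `u` to `v` (listed from `v`), `av` is its complement and has `k` elements. -/
structure Partial (n : ℕ) (A : ℕ → ℕ → Prop) (u v av k : ℕ) (p : List ℕ) : Prop where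
  head : p.head? = some v
  last : p.getLast? = some u
  nodup : p.Nodup
  lt : ∀ i ∈ p, i < n
  chain : p.IsChain A
  compl : ∀ i, av.testBit i = true ↔ i < n ∧ i ∉ p
  length : p.length + k = n

section Search

variable {n t R x : ℕ} {A : ℕ → ℕ → Prop} {F : Finset ℕ} {H low S u : ℕ}

theorem Partial.step (hA : Obstruction n t R x A F) (hC : Consistent n x A F H low S)
    {v av k w : ℕ} {p : List ℕ} (hp : Partial n A u v av (k + 1) p)
    (hw : (row H v av).testBit w = true) : Partial n A u w (toggle av w) k (w :: p) := by
  rw [testBit_row, Bool.and_eq_true, hp.compl] at hw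
  obtain ⟨hH, hwn, hwp⟩ := hw
  have hvw : A v w := hC.sub v w (by have := hA.le; omega) hH
  obtain ⟨y, p', rfl⟩ : ∃ y p', p = y :: p' := by
    cases p with
    | nil => simpa using hp.head
    | cons y p' => exact ⟨y, p', rfl⟩
  obtain rfl : y = v := by simpa using hp.head
  refine ⟨rfl, ?_, ?_, ?_, ?_, ?_, ?_⟩
  · simpa using hp.last
  · exact List.nodup_cons.2 ⟨hwp, hp.nodup⟩
  · intro i hi
    rcases List.mem_cons.1 hi with rfl | hi
    · exact hwn
    · exact hp.lt i hi
  · exact List.isChain_cons_cons.2 ⟨hA.symm _ _ hvw, hp.chain⟩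
  · intro i
    rw [testBit_toggle]
    have := hp.compl i
    by_cases hiw : w = i
    · subst hiw
      simp only [(hp.compl w).2 ⟨hwn, hwp⟩, decide_true, List.mem_cons]
      simp
    · have hiw' : i ≠ w := fun h => hiw h.symm
      rw [List.mem_cons]
      simp only [hiw, decide_false, Bool.xor_false, hiw', false_or]
      exact this
  · have := hp.length
    simp only [List.length_cons] at this ⊢
    omega

theorem testBit_log2_of_toggle {m : ℕ} (hm : m ≠ 0) (h : toggle m (Nat.log2 m) ≠ 0) :
    m.testBit (Nat.log2 (toggle m (Nat.log2 m))) = true := by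
  have h1 := Nat.testBit_log2 h
  rw [testBit_toggle] at h1
  by_cases he : Nat.log2 m = Nat.log2 (toggle m (Nat.log2 m))
  · rw [← he]
    exact Nat.testBit_log2 hm
  · simpa [he] using h1

theorem exists_hamList_of_ends (hA : Obstruction n t R x A F) (hC : Consistent n x A F H low S)
    {k v av i : ℕ} {p : List ℕ} (hp : Partial n A u v av k p)
    (hi : (ends H k v av).testBit i = true) :
    ∃ q, q.length = k ∧ HamList n A (q ++ p) ∧ (q ++ p).head? = some i := by
  induction k generalizing v av p with
  | zero =>
    change (2 ^ v).testBit i = true at hi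
    rw [Nat.testBit_two_pow, decide_eq_true_eq] at hi
    subst hi
    exact ⟨[], rfl, ⟨hp.nodup, hp.length, hp.lt, hp.chain⟩, hp.head⟩
  | succ k ih =>
    have key : ∀ w, (row H v av).testBit w = true →
        (ends H k w (toggle av w)).testBit i = true →
        ∃ q, q.length = k + 1 ∧ HamList n A (q ++ p) ∧ (q ++ p).head? = some i := by
      intro w hw hi
      obtain ⟨q, hq, hq1, hq2⟩ := ih (hp.step hA hC hw) hi
      exact ⟨q ++ [w], by simp [hq], by simpa using hq1, by simpa using hq2⟩
    revert hi
    change (elim (row H v av) 0 fun m =>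
      Nat.lor (ends H k (Nat.log2 m) (toggle av (Nat.log2 m)))
        (elim (toggle m (Nat.log2 m)) 0 fun m' =>
          ends H k (Nat.log2 m') (toggle av (Nat.log2 m')))).testBit i = true → _
    refine elim_prop (p := fun y => y.testBit i = true → _) (fun _ h => by simp at h) fun hm h => ?_
    rw [show ∀ a b, Nat.lor a b = a ||| b from fun _ _ => rfl, Nat.testBit_or,
      Bool.or_eq_true] at h
    rcases h with h | h
    · exact key _ (Nat.testBit_log2 hm) h
    · revert h
      exact elim_prop (p := fun y => y.testBit i = true → _) (fun _ h => by simp at h)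
        fun hm' h => key _ (testBit_log2_of_toggle hm hm') h

/-- The search result `acc` is correct: bits below `32` are vertices outside `F`, and the vertices
given by the next `32` bits are not further neighbours of `u`. -/
structure Correct (A : ℕ → ℕ → Prop) (F : Finset ℕ) (H u acc : ℕ) : Prop where
  ne_zero : acc ≠ 0
  low : ∀ i < 32, acc.testBit i = true → i ∉ F
  high : ∀ i, acc.testBit (i + 32) = true → A u i → H.testBit (32 * u + i) = true

theorem dropBits_ne_zero (hA : Obstruction n t R x A F) {acc : ℕ}
    (h : ∀ i < 32, acc.testBit i = true → i ∉ F) :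
    dropBits t (Nat.xor (2 ^ n - 1) (Nat.land acc (2 ^ n - 1))) ≠ 0 := by
  intro h0
  refine absurd hA.card (Nat.not_lt.2 (card_le_of_dropBits_eq_zero h0 F fun f hf => ?_))
  have hf1 := hA.lt_of_mem f hf
  have hf2 : acc.testBit f = false := by
    by_contra hacc
    exact h f (hf1.trans_le hA.le) (by simpa using hacc) hf
  change ((2 ^ n - 1) ^^^ (acc &&& (2 ^ n - 1))).testBit f = true
  simp [hf1, hf2]

theorem exists_new_neighbour (hA : Obstruction n t R x A F) (hC : Consistent n x A F H low S)
    (hu : u < n) (huS : S.testBit u = false) (huF : u ∉ F) :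
    ∃ c, A u c ∧ H.testBit (32 * u + c) = false := by
  obtain ⟨hux, a, b, -, -, -, hab⟩ := hC.unsat u hu huS
  obtain ⟨c, hc, hca, hcb⟩ := hA.three u hu huF hux a b
  refine ⟨c, hc, ?_⟩
  by_contra h
  have := (hab c ((hA.lt _ _ hc).trans_le hA.le)).1 (by simpa using h)
  tauto

theorem Correct.record (hA : Obstruction n t R x A F) (hC : Consistent n x A F H low S)
    (hu : u < n) (huS : S.testBit u = false) {tail en acc : ℕ} (h : Correct A F H u acc)
    (huF : u ∉ F) (hen : ∀ i, en.testBit i = true → i ∉ F ∧ i < n)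
    (htail : ∀ i, tail.testBit i = true → ¬ A u i) (htn : ∀ i, tail.testBit i = true → i < n) :
    Correct A F H u (record (2 ^ n - 1) t u (row H u (2 ^ n - 1)) tail en acc) := by
  have hacc : Correct A F H u (Nat.lor acc (Nat.lor (Nat.lor en (Nat.pow 2 u))
      (Nat.shiftLeft tail 32))) := by
    change Correct A F H u (acc ||| (en ||| 2 ^ u ||| tail <<< 32))
    refine ⟨fun h0 => h.ne_zero (Nat.or_eq_zero_iff.1 h0).1, fun i hi hb => ?_, fun i hb hAi => ?_⟩
    · have h32 : ¬ 32 ≤ i := by omega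
      simp only [Nat.testBit_or, Nat.testBit_shiftLeft, Nat.testBit_two_pow, Bool.or_eq_true,
        h32, decide_false, Bool.false_and, decide_eq_true_eq] at hb
      rcases hb with hb | (hb | rfl) | hb
      · exact h.low i hi hb
      · exact (hen i hb).1
      · exact huF
      · simp at hb
    · simp only [Nat.testBit_or, Nat.testBit_shiftLeft, Nat.testBit_two_pow, Bool.or_eq_true,
        Bool.and_eq_true, decide_eq_true_eq] at hb
      have := hA.le
      rcases hb with hb | (hb | rfl) | hb
      · exact h.high i hb hAi
      · have := (hen _ hb).2
        omega
      · omega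
      · exact absurd hAi (htail i (by simpa using hb.2))
  refine elim_prop (fun _ => ?_) fun h0 => ?_
  · refine elim_prop (fun h0 => absurd h0 hacc.ne_zero) fun _ => ?_
    refine elim_prop (fun h0 => absurd h0 (dropBits_ne_zero hA hacc.low)) fun _ => ?_
    refine elim_prop (fun h0 => ?_) fun _ => hacc
    exfalso
    obtain ⟨c, hc, hcH⟩ := exists_new_neighbour hA hC hu huS huF
    have h1 := congrArg (fun z => Nat.testBit z c) (Nat.xor_eq_zero_iff.1 h0)
    simp only [Nat.testBit_two_pow_sub_one, hA.lt _ _ hc, decide_true] at h1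
    have h2 := hacc.high c (by
      rw [h1, add_comm]
      exact (Nat.testBit_shiftRight _).symm) hc
    simp [hcH] at h2
  · obtain ⟨i, hi⟩ := Nat.exists_testBit_of_ne_zero h0
    change (tail &&& _).testBit i = true at hi
    rw [Nat.testBit_and, testBit_row, Bool.and_eq_true, Bool.and_eq_true] at hi
    have := htn i hi.1
    have := hA.le
    exact absurd (hC.sub u i (by omega) hi.2.1) (htail i hi.1)

theorem Correct.dfs (hA : Obstruction n t R x A F) (hC : Consistent n x A F H low S)
    (hu : u < n) (huS : S.testBit u = false) {k v av e acc : ℕ} {p : List ℕ}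
    (hp : Partial n A u v av (k + R) p) (h : Correct A F H u acc) :
    Correct A F H u (dfs (2 ^ n - 1) t R H u (row H u (2 ^ n - 1)) k v av e acc) := by
  induction k generalizing v av e acc p with
  | zero =>
    rw [Nat.zero_add] at hp
    change Correct A F H u (elim (ends H R v av) acc fun en =>
      HamSearch.record (2 ^ n - 1) t u (row H u (2 ^ n - 1)) av en acc)
    refine elim_prop (fun _ => h) fun h0 => ?_
    have hux := (hC.unsat u hu huS).1
    obtain ⟨i, hi⟩ := Nat.exists_testBit_of_ne_zero h0
    obtain ⟨q, hq, hql, hqi⟩ := exists_hamList_of_ends hA hC hp hi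
    obtain ⟨huF, -, hqu⟩ := hA.path q p u hql hq hp.last hux
    refine h.record hA hC hu huS huF (fun j hj => ?_) (fun j hj => ?_) fun j hj =>
      ((hp.compl j).1 hj).1
    · obtain ⟨q, hq, hql, hqj⟩ := exists_hamList_of_ends hA hC hp hj
      exact ⟨(hA.path q p u hql hq hp.last hux).2.1 j hqj, hql.lt j (List.mem_of_head? hqj)⟩
    · have hj' := (hp.compl j).1 hj
      exact hqu j ((List.mem_append.1 (hql.mem hj'.1)).resolve_right hj'.2)
  | succ k ih =>
    have key : ∀ w e acc, (row H v av).testBit w = true → Correct A F H u acc →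
        Correct A F H u (HamSearch.dfs (2 ^ n - 1) t R H u (row H u (2 ^ n - 1)) k w (toggle av w) e acc) :=
      fun w e acc hw hacc => ih (Partial.step hA hC (k := k + R) (by
        rwa [show k + R + 1 = k + 1 + R by omega]) hw) hacc
    have hbranch : ∀ w y e acc, (row H v av).testBit w = true → Correct A F H u acc →
        Correct A F H u (branch H (HamSearch.dfs (2 ^ n - 1) t R H u (row H u (2 ^ n - 1)) k)
          w y av e acc) := fun w y e acc hw hacc =>
      elim_prop (fun _ => hacc) fun _ => elim_prop
        (fun _ => elim_prop (fun _ => key w 1 acc hw hacc) fun _ => hacc) fun _ => key w e acc hw hacc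
    change Correct A F H u (extend H _ v av e acc)
    refine elim_prop (fun _ => h) fun hm => ?_
    have h1 := Nat.testBit_log2 hm
    refine elim_prop (fun _ => key _ e acc h1 h) fun hm' => ?_
    have h2 := testBit_log2_of_toggle hm hm'
    have h3 := hbranch _ (Nat.log2 (toggle (row H v av) (Nat.log2 (row H v av)))) e acc h1 h
    exact elim_prop (fun h0 => absurd h0 h3.ne_zero) fun _ => hbranch _ _ e _ h2 h3

theorem exists_of_loop_ne_zero {f : ℕ → ℕ → ℕ} {k m c : ℕ} (h : loop f k m c ≠ 0) {w : ℕ}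
    (hw : m.testBit w = true) : ∃ c, f w c ≠ 0 := by
  induction k generalizing m c with
  | zero => exact absurd rfl h
  | succ k ih =>
    change elim m c (fun m => elim (f (Nat.log2 m) c) 0 fun c' =>
      loop f k (toggle m (Nat.log2 m)) c') ≠ 0 at h
    have hm : m ≠ 0 := by
      rintro rfl
      simp at hw
    rw [elim_of_ne hm] at h
    by_cases hf : f (Nat.log2 m) c = 0
    · rw [hf] at h
      exact absurd rfl h
    rw [elim_of_ne hf] at h
    by_cases hwm : Nat.log2 m = w
    · exact ⟨c, hwm ▸ hf⟩
    · exact ih h (by rw [testBit_toggle, hw]; simp [hwm])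

theorem testBit_full_xor (m i : ℕ) :
    (Nat.xor (2 ^ n - 1) m).testBit i = (decide (i < n) ^^ m.testBit i) := by
  change ((2 ^ n - 1) ^^^ m).testBit i = _
  rw [Nat.testBit_xor, Nat.testBit_two_pow_sub_one]

theorem Consistent.insert (hA : Obstruction n t R x A F) (hC : Consistent n x A F H low S)
    (hu : u < n) (huS : S.testBit u = false) {acc w : ℕ} (hacc : Correct A F H u acc)
    (huw : A u w) (huwH : H.testBit (32 * u + w) = false) :
    Consistent n x A F (H ||| edge u w) (acc &&& (2 ^ n - 1) ||| 2 ^ w) (S ||| (2 ^ u ||| 2 ^ w)) := by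
  have hn := hA.le
  have hw := hA.lt _ _ huw
  have hwu := hA.symm _ _ huw
  have hne : u ≠ w := by
    rintro rfl
    exact hA.irrefl _ huw
  have hwuH : ¬ H.testBit (32 * w + u) = true := fun h => by
    simp [hC.symm w (by omega) u (by omega) h] at huwH
  have hwS : S.testBit w = false := by
    by_contra h
    exact hwuH (hC.sat w (by simpa using h) u hwu)
  have hedge : ∀ i j, j < 32 → ((H ||| edge u w).testBit (32 * i + j) = true ↔
      H.testBit (32 * i + j) = true ∨ i = u ∧ j = w ∨ i = w ∧ j = u) := fun i j hj => by
    rw [Nat.testBit_or, Bool.or_eq_true, testBit_edge (by omega) (by omega) hj]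
  have hnew : ∀ y z, y < n → A y z → S.testBit y = false → ¬ H.testBit (32 * y + z) = true →
      y ∉ F ∧ ∀ j, A y j → H.testBit (32 * y + j) = true ∨ j = z := by
    intro y z hy hyz hyS hyzH
    obtain ⟨-, a, b, hab, ha, hb, hH⟩ := hC.unsat y hy hyS
    have hz : z < 32 := (hA.lt _ _ hyz).trans_le hn
    have hya := hC.sub y a ha ((hH a ha).2 (Or.inl rfl))
    have hyb := hC.sub y b hb ((hH b hb).2 (Or.inr rfl))
    rw [hH z hz] at hyzH
    push Not at hyzH
    refine ⟨fun hyF => ?_, fun j hj => ?_⟩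
    · rcases hA.two y hyF a b z hya hyb hyz with h | h | h
      · exact hab h
      · exact hyzH.1 h.symm
      · exact hyzH.2 h.symm
    · rw [hH j ((hA.lt _ _ hj).trans_le hn), or_assoc]
      exact hA.le_three y a b z j hya hyb hyz hj hab hyzH.1.symm hyzH.2.symm
  have hnewu := hnew u w hu huw huS (by simp [huwH])
  have hneww := hnew w u hw hwu hwS hwuH
  refine ⟨fun i j hj h => ?_, fun i hi j hj h => ?_, fun i h => ?_, fun i h => ?_,
    fun i h j hj => ?_, fun i hi h => ?_⟩
  · rcases (hedge i j hj).1 h with h | ⟨rfl, rfl⟩ | ⟨rfl, rfl⟩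
    · exact hC.sub i j hj h
    · exact huw
    · exact hwu
  · rw [hedge _ _ hi]
    rcases (hedge i j hj).1 h with h | h | h
    · exact Or.inl (hC.symm i hi j hj h)
    · exact Or.inr (Or.inr h.symm)
    · exact Or.inr (Or.inl h.symm)
  · simp only [Nat.testBit_or, Nat.testBit_and, Nat.testBit_two_pow_sub_one, Nat.testBit_two_pow,
      Bool.or_eq_true, Bool.and_eq_true, decide_eq_true_eq] at h
    rcases h with ⟨h, hi⟩ | rfl
    · exact ⟨hacc.low i (by omega) h, hi⟩
    · exact ⟨hneww.1, hw⟩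
  · simp only [Nat.testBit_or, Nat.testBit_two_pow, Bool.or_eq_true, decide_eq_true_eq] at h
    rcases h with h | rfl | rfl
    · exact hC.sat_lt i h
    · exact hu
    · exact hw
  · rw [hedge i j ((hA.lt _ _ hj).trans_le hn)]
    simp only [Nat.testBit_or, Nat.testBit_two_pow, Bool.or_eq_true, decide_eq_true_eq] at h
    rcases h with h | rfl | rfl
    · exact Or.inl (hC.sat i h j hj)
    · exact (hnewu.2 j hj).imp id fun h => Or.inl ⟨rfl, h⟩
    · exact (hneww.2 j hj).imp id fun h => Or.inr ⟨rfl, h⟩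
  · simp only [Nat.testBit_or, Nat.testBit_two_pow, Bool.or_eq_false_iff, decide_eq_false_iff_not]
      at h
    obtain ⟨hx, a, b, hab, ha, hb, hH⟩ := hC.unsat i hi h.1
    refine ⟨hx, a, b, hab, ha, hb, fun j hj => ?_⟩
    rw [hedge i j hj, ← hH j hj]
    have h1 := h.2.1
    have h2 := h.2.2
    refine ⟨fun h => h.resolve_right ?_, Or.inl⟩
    rintro (⟨rfl, -⟩ | ⟨rfl, -⟩) <;> contradiction

/-- Soundness of the search. -/
theorem check_eq_zero (hA : Obstruction n t R x A F) (hC : Consistent n x A F H low S)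
    (hR : R < n) (d c : ℕ) : check (2 ^ n - 1) n t R d H low S c = 0 := by
  by_contra h
  induction d generalizing H low S c with
  | zero => exact h rfl
  | succ d ih =>
    change elim (dropBits t (Nat.xor (2 ^ n - 1) (Nat.land low (2 ^ n - 1)))) c (fun _ =>
      elim (Nat.div c 32) 0 (expand (2 ^ n - 1) n t R (check (2 ^ n - 1) n t R d) H low S
        (Nat.mod c 32))) ≠ 0 at h
    rw [elim_of_ne (dropBits_ne_zero hA fun i _ hi => (hC.low i hi).1)] at h
    revert h
    refine elim_prop (p := fun y => y ≠ 0 → False) (fun _ h => h rfl) fun _ => ?_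
    generalize Nat.mod c 32 = u
    generalize Nat.div c 32 = c
    refine elim_prop (p := fun y => y ≠ 0 → False) (fun _ h => h rfl) fun h0 => ?_
    obtain ⟨i, hi⟩ := Nat.exists_testBit_of_ne_zero h0
    change (2 ^ u &&& _).testBit i = true at hi
    rw [Nat.testBit_and, Nat.testBit_two_pow, testBit_full_xor, Bool.and_eq_true,
      decide_eq_true_eq] at hi
    obtain ⟨rfl, hi⟩ := hi
    have hn := hA.le
    by_cases hu : u < n
    swap
    · exact absurd (hC.sat_lt u (by simpa [hu] using hi)) hu
    have huS : S.testBit u = false := by simpa [hu] using hi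
    have hinit : Correct A F H u (Nat.lor low (Nat.shiftLeft (Nat.lor S
        (Nat.lor (row H u (2 ^ n - 1)) (Nat.pow 2 u))) 32)) := by
      change Correct A F H u (low ||| (S ||| (row H u (2 ^ n - 1) ||| 2 ^ u)) <<< 32)
      refine ⟨fun h0 => ?_, fun i hi hb => ?_, fun i hb hAi => ?_⟩
      · have h1 := congrArg (fun z => Nat.testBit z (u + 32)) h0
        simp [Nat.testBit_shiftLeft] at h1
      · have h32 : ¬ 32 ≤ i := by omega
        simp only [Nat.testBit_or, Nat.testBit_shiftLeft, Bool.or_eq_true,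
          h32, decide_false, Bool.false_and] at hb
        exact (hC.low i (by simpa using hb)).1
      · simp only [Nat.testBit_or, Nat.testBit_shiftLeft, Nat.testBit_two_pow, Bool.or_eq_true,
          Bool.and_eq_true, decide_eq_true_eq, Nat.add_sub_cancel, testBit_row] at hb
        rcases hb with hb | ⟨-, hb | ⟨hb, -⟩ | rfl⟩
        · have := (hC.low _ hb).2
          omega
        · exact hC.symm i (by have := hA.lt _ _ hAi; omega) u (by omega)
            (hC.sat i hb u (hA.symm _ _ hAi))
        · exact hb
        · exact absurd hAi (hA.irrefl _)
    have hpart : Partial n A u u (toggle (2 ^ n - 1) u) (n - 1 - R + R) [u] := by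
      refine ⟨rfl, rfl, by simp, by simpa using hu, by simp, fun i => ?_, ?_⟩
      · rw [testBit_toggle, Nat.testBit_two_pow_sub_one]
        by_cases hiu : u = i
        · subst hiu
          simp [hu]
        · simp [hiu, Ne.symm hiu]
      · simp only [List.length_singleton]
        omega
    have hacc := hinit.dfs hA hC hu huS (e := 0) hpart
    refine elim_prop (p := fun y => y ≠ 0 → False) (fun h => absurd h hacc.ne_zero) fun _ => ?_
    refine elim_prop (p := fun y => y ≠ 0 → False) (fun _ h => h rfl) fun h0 h => ?_
    obtain ⟨i, hi⟩ := Nat.exists_testBit_of_ne_zero h0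
    change (_ &&& 2 ^ u).testBit i = true at hi
    rw [Nat.testBit_and, Nat.testBit_two_pow, Bool.and_eq_true, decide_eq_true_eq] at hi
    obtain ⟨hi, rfl⟩ := hi
    have huF := hacc.low u (by omega) hi
    obtain ⟨w, huw, huwH⟩ := exists_new_neighbour hA hC hu huS huF
    have hC' := hC.insert hA hu huS hacc huw huwH
    obtain ⟨c, hc⟩ := exists_of_loop_ne_zero h (w := w) (by
      rw [testBit_full_xor]
      simp only [hA.lt _ _ huw, decide_true, Bool.true_xor, Bool.not_eq_true']
      by_contra hb
      rw [hacc.high w (by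
        rw [add_comm, ← Nat.testBit_shiftRight]
        simpa using hb) huw] at huwH
      simp at huwH)
    revert hc
    refine elim_prop (p := fun y => y ≠ 0 → False) (fun _ h => h rfl) fun _ => ?_
    refine elim_prop (p := fun y => y ≠ 0 → False) (fun _ h => h rfl) fun _ => ?_
    exact elim_prop (p := fun y => y ≠ 0 → False) (fun _ h => h rfl) fun _ h => ih hC' _ h

end Search

theorem testBit_graph {es : List (ℕ × ℕ)} (hes : ∀ e ∈ es, e.1 < 32 ∧ e.2 < 32) {i j : ℕ}
    (hj : j < 32) :
    (graph es).testBit (32 * i + j) = true ↔ (i, j) ∈ es ∨ (j, i) ∈ es := by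
  induction es with
  | nil => simp [graph]
  | cons e es ih =>
    have he := hes e List.mem_cons_self
    change (edge e.1 e.2 ||| graph es).testBit _ = true ↔ _
    rw [Nat.testBit_or, Bool.or_eq_true, testBit_edge he.2 he.1 hj,
      ih fun e' he' => hes e' (List.mem_cons_of_mem _ he')]
    simp only [List.mem_cons, Prod.ext_iff]
    tauto

theorem testBit_mask (l : List ℕ) (i : ℕ) : (mask l).testBit i = true ↔ i ∈ l := by
  induction l with
  | nil => simp [mask]
  | cons e l ih =>
    change (2 ^ e ||| mask l).testBit i = true ↔ _
    rw [Nat.testBit_or, Bool.or_eq_true, ih, Nat.testBit_two_pow, decide_eq_true_eq, List.mem_cons,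
      eq_comm]

theorem mem_pathEdges {n i j : ℕ} : (i, j) ∈ pathEdges n ↔ j = i + 1 ∧ j < n := by
  simp only [pathEdges, List.mem_map, List.mem_range, Prod.mk.injEq]
  constructor
  · rintro ⟨k, hk, rfl, rfl⟩
    omega
  · rintro ⟨rfl, h⟩
    exact ⟨i, by omega, rfl, rfl⟩

section Run

variable {n t R x : ℕ} {A : ℕ → ℕ → Prop} {F : Finset ℕ}

theorem run_eq_zero (hA : Obstruction n t R x A F) (hR : R < n) {chords : List (ℕ × ℕ)}
    {low S : List ℕ} (hpath : ∀ i, i + 1 < n → A i (i + 1)) (hchords : ∀ e ∈ chords, A e.1 e.2)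
    (hlow : ∀ i ∈ low, i < n ∧ i ∉ F) (hSn : ∀ i ∈ S, i < n)
    (hS : ∀ i ∈ S, ∀ j, A i j → j = i + 1 ∨ i = j + 1 ∨ (i, j) ∈ chords ∨ (j, i) ∈ chords)
    (hS' : ∀ i < n, i ∉ S → i ≠ x ∧ ∃ a b, a ≠ b ∧ a < n ∧ b < n ∧ ∀ j < 32,
      (j = i + 1 ∧ j < n ∨ i = j + 1 ∨ (i, j) ∈ chords ∨ (j, i) ∈ chords) ↔ j = a ∨ j = b)
    (c : ℕ) : run n t R chords low S c = 0 := by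
  have hn := hA.le
  have hes : ∀ e ∈ pathEdges n ++ chords, A e.1 e.2 := by
    rintro ⟨i, j⟩ he
    rcases List.mem_append.1 he with he | he
    · obtain ⟨rfl, h⟩ := mem_pathEdges.1 he
      exact hpath i h
    · exact hchords _ he
  have hlt : ∀ e ∈ pathEdges n ++ chords, e.1 < 32 ∧ e.2 < 32 := fun e he =>
    ⟨(hA.lt _ _ (hA.symm _ _ (hes e he))).trans_le hn, (hA.lt _ _ (hes e he)).trans_le hn⟩
  have hgraph : ∀ i j, i < n → j < 32 →
      ((graph (pathEdges n ++ chords)).testBit (32 * i + j) = true ↔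
      (j = i + 1 ∧ j < n ∨ i = j + 1 ∨ (i, j) ∈ chords ∨ (j, i) ∈ chords)) := fun i j hi hj => by
    rw [testBit_graph hlt hj, List.mem_append, List.mem_append, mem_pathEdges, mem_pathEdges]
    simp only [hi, and_true]
    tauto
  have hC : Consistent n x A F (graph (pathEdges n ++ chords)) (mask low) (mask S) := by
    refine ⟨fun i j hj h => ?_, fun i hi j hj h => ?_, fun i h => ?_, fun i h => ?_,
      fun i h j hj => ?_, fun i hi h => ?_⟩
    · rw [testBit_graph hlt hj] at h
      exact h.elim (hes _) fun h => hA.symm _ _ (hes _ h)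
    · rw [testBit_graph hlt hj] at h
      rw [testBit_graph hlt hi]
      exact h.symm
    · exact (hlow i ((testBit_mask _ _).1 h)).symm
    · exact hSn i ((testBit_mask _ _).1 h)
    · rw [testBit_mask] at h
      have hjn := hA.lt _ _ hj
      rw [hgraph i j (hSn i h) (by omega)]
      have := hS i h j hj
      tauto
    · have hiS : i ∉ S := fun h' => by simp [(testBit_mask S i).2 h'] at h
      obtain ⟨hx, a, b, hab, ha, hb, H⟩ := hS' i hi hiS
      exact ⟨hx, a, b, hab, by omega, by omega, fun j hj => (hgraph i j hi hj).trans (H j hj)⟩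
  refine elim_prop (p := fun y => y = 0) (fun _ => rfl) fun _ => ?_
  refine elim_prop (p := fun y => y = 0) (fun _ => rfl) fun _ => ?_
  refine elim_prop (p := fun y => y = 0) (fun _ => rfl) fun _ => ?_
  exact elim_prop (p := fun y => y = 0) (fun _ => rfl) fun _ => check_eq_zero hA hC hR _ _

theorem Obstruction.notMem_of_three (hA : Obstruction n t R x A F) {v a b c : ℕ} (ha : A v a)
    (hb : A v b) (hc : A v c) (hab : a ≠ b) (hac : a ≠ c) (hbc : b ≠ c) : v ∉ F := fun hv => by
  rcases hA.two v hv a b c ha hb hc with h | h | h <;> contradiction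

theorem runR_eq_zero {k : ℕ} (hA : Obstruction n (1 + n % 2) R n A F) (hR : 2 ≤ R) (hRk : R ≤ k)
    (hk : 2 * k + R + 2 ≤ n) (hpath : ∀ i, i + 1 < n → A i (i + 1)) (h0 : 0 ∉ F)
    (hlast : n - 1 ∉ F) (h1 : A 0 (n - 1 - R)) (h2 : A k (n - 1)) (c : ℕ) :
    runR n R k c = 0 := by
  have hpath' : ∀ i, 0 < i → i < n → A i (i - 1) := fun i hi hin => by
    have := hpath (i - 1) (by omega)
    rw [Nat.sub_add_cancel hi] at this
    exact hA.symm _ _ this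
  have a1 := hpath (n - 1 - R) (by omega)
  have a2 := hpath' (n - 1 - R) (by omega) (by omega)
  have a3 := hpath k (by omega)
  have a4 := hpath' k (by omega) (by omega)
  have a5 := hA.symm _ _ h1
  refine run_eq_zero hA (by omega) hpath ?_ ?_ ?_ ?_ ?_ c
  · simp only [List.mem_cons, List.not_mem_nil, or_false]
    rintro e (rfl | rfl)
    · exact h1
    · exact h2
  · simp only [List.mem_cons, List.not_mem_nil, or_false]
    rintro i (rfl | rfl | rfl | rfl)
    · exact ⟨by omega, h0⟩
    · exact ⟨by omega, hlast⟩
    · exact ⟨by omega, hA.notMem_of_three a1 a2 a5 (by omega) (by omega) (by omega)⟩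
    · exact ⟨by omega, hA.notMem_of_three a3 a4 h2 (by omega) (by omega) (by omega)⟩
  · simp only [List.mem_cons, List.not_mem_nil, or_false]
    omega
  · simp only [List.mem_cons, List.not_mem_nil, or_false, Prod.mk.injEq]
    rintro i (rfl | rfl) j hj
    · have := hA.le_three _ _ _ _ j a1 a2 a5 hj (by omega) (by omega) (by omega)
      omega
    · have := hA.le_three _ _ _ _ j a3 a4 h2 hj (by omega) (by omega) (by omega)
      omega
  · simp only [List.mem_cons, List.not_mem_nil, or_false, Prod.mk.injEq, not_or]
    intro i hi hiS
    refine ⟨by omega, ?_⟩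
    by_cases hi0 : i = 0
    · exact ⟨1, n - 1 - R, by omega, by omega, by omega, by omega⟩
    by_cases hin : i = n - 1
    · exact ⟨n - 2, k, by omega, by omega, by omega, by omega⟩
    · exact ⟨i - 1, i + 1, by omega, by omega, by omega, by omega⟩

theorem runT_eq_zero {a b : ℕ} (hA : Obstruction n (1 + n % 2) 1 n A F) (ha : 1 ≤ a) (hab : a ≤ b)
    (hb : 2 * b + a + 4 ≤ n) (hpath : ∀ i, i + 1 < n → A i (i + 1)) (h0 : 0 ∉ F)
    (h1 : A 0 (n - 2)) (h2 : A a (n - 1)) (h3 : A (a + 1 + b) (n - 1)) (c : ℕ) :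
    runT n a b c = 0 := by
  have hpath' : ∀ i, 0 < i → i < n → A i (i - 1) := fun i hi hin => by
    have := hpath (i - 1) (by omega)
    rw [Nat.sub_add_cancel hi] at this
    exact hA.symm _ _ this
  have a1 := hpath (n - 2) (by omega)
  have a2 := hpath' (n - 2) (by omega) (by omega)
  have a3 := hpath a (by omega)
  have a4 := hpath' a (by omega) (by omega)
  have a5 := hA.symm _ _ h1
  have a6 := hpath (a + 1 + b) (by omega)
  have a7 := hpath' (a + 1 + b) (by omega) (by omega)
  have a8 := hpath' (n - 1) (by omega) (by omega)
  have a9 := hA.symm _ _ h2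
  have a10 := hA.symm _ _ h3
  refine run_eq_zero hA (by omega) hpath ?_ ?_ ?_ ?_ ?_ c
  · simp only [List.mem_cons, List.not_mem_nil, or_false]
    rintro e (rfl | rfl | rfl)
    · exact h1
    · exact h2
    · exact h3
  · simp only [List.mem_cons, List.not_mem_nil, or_false]
    rintro i (rfl | rfl | rfl | rfl | rfl)
    · exact ⟨by omega, h0⟩
    · exact ⟨by omega, hA.notMem_of_three a8 a9 a10 (by omega) (by omega) (by omega)⟩
    · exact ⟨by omega, hA.notMem_of_three a1 a2 a5 (by omega) (by omega) (by omega)⟩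
    · exact ⟨by omega, hA.notMem_of_three a3 a4 h2 (by omega) (by omega) (by omega)⟩
    · exact ⟨by omega, hA.notMem_of_three a6 a7 h3 (by omega) (by omega) (by omega)⟩
  · simp only [List.mem_cons, List.not_mem_nil, or_false]
    omega
  · simp only [List.mem_cons, List.not_mem_nil, or_false, Prod.mk.injEq]
    rintro i (rfl | rfl | rfl | rfl) j hj
    · have := hA.le_three _ _ _ _ j a8 a9 a10 hj (by omega) (by omega) (by omega)
      omega
    · have := hA.le_three _ _ _ _ j a1 a2 a5 hj (by omega) (by omega) (by omega)
      omega
    · have := hA.le_three _ _ _ _ j a3 a4 h2 hj (by omega) (by omega) (by omega)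
      omega
    · have := hA.le_three _ _ _ _ j a6 a7 h3 hj (by omega) (by omega) (by omega)
      omega
  · simp only [List.mem_cons, List.not_mem_nil, or_false, Prod.mk.injEq, not_or]
    intro i hi hiS
    refine ⟨by omega, ?_⟩
    by_cases hi0 : i = 0
    · exact ⟨1, n - 2, by omega, by omega, by omega, by omega⟩
    · exact ⟨i - 1, i + 1, by omega, by omega, by omega, by omega⟩

theorem runL_eq_zero {j : ℕ} (hA : Obstruction (j + 1) 0 1 j A F) (hj : 3 ≤ j)
    (hpath : ∀ i < j, A i (i + 1)) (h0 : 0 ∉ F) (hjF : j ∉ F)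
    (h1 : A 0 (j - 1)) (h2 : ∀ i, A j i → i = j - 1) (c : ℕ) :
    runL j c = 0 := by
  have a1 := hpath (j - 1) (by omega)
  have a2 := hpath (j - 2) (by omega)
  rw [show j - 2 + 1 = j - 1 by omega] at a2
  replace a2 := hA.symm _ _ a2
  have a5 := hA.symm _ _ h1
  refine run_eq_zero hA (by omega) (fun i hi => hpath i (by omega)) ?_ ?_ ?_ ?_ ?_ c
  · simp only [List.mem_cons, List.not_mem_nil, or_false]
    rintro e rfl
    exact h1
  · simp only [List.mem_cons, List.not_mem_nil, or_false]
    rintro i (rfl | rfl | rfl)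
    · exact ⟨by omega, h0⟩
    · exact ⟨by omega, hA.notMem_of_three a1 a2 a5 (by omega) (by omega) (by omega)⟩
    · exact ⟨by omega, hjF⟩
  · simp only [List.mem_cons, List.not_mem_nil, or_false]
    omega
  · simp only [List.mem_cons, List.not_mem_nil, or_false, Prod.mk.injEq]
    rintro i (rfl | rfl) k hk
    · have := hA.le_three _ _ _ _ k a1 a2 a5 hk (by omega) (by omega) (by omega)
      omega
    · have := h2 k hk
      omega
  · simp only [List.mem_cons, List.not_mem_nil, or_false, Prod.mk.injEq, not_or]
    intro i hi hiS
    refine ⟨by omega, ?_⟩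
    by_cases hi0 : i = 0
    · exact ⟨1, j - 1, by omega, by omega, by omega, by omega⟩
    · exact ⟨i - 1, i + 1, by omega, by omega, by omega, by omega⟩

end Run

/-- Search certificates for `runT`: entries `(n, a, b, c)`, where the base `32` digits of `c` list
the vertices to be branched on. -/
def certT : List (ℕ × ℕ × ℕ × ℕ) :=
  [(7, 1, 1, 1), (8, 1, 1, 34), (9, 1, 1, 34), (9, 1, 2, 34), (10, 1, 1, 32772), (10, 1, 2, 32),
   (10, 2, 2, 33), (11, 1, 1, 32), (11, 1, 2, 32), (11, 1, 3, 32), (11, 2, 2, 33),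
   (12, 1, 1, 43820026779735949449), (12, 1, 2, 1286368), (12, 1, 3, 35954912),
   (12, 2, 2, 41982987364), (12, 2, 3, 41127013), (13, 1, 1, 1075906564), (13, 1, 2, 41166080),
   (13, 1, 3, 1319380224), (13, 1, 4, 37987584), (13, 2, 2, 1347754757220), (13, 2, 3, 1316064357),
   (13, 3, 3, 1213337730), (14, 1, 1, 1543310985897862564333186155677017549694490096126041090),
   (14, 1, 2, 49946230389422849271176544), (14, 1, 3, 45443027286754356522834951229710338),
   (14, 1, 4, 52376093451750416342002504599904),
   (14, 2, 2, 60295763117589262110581852092595649094842742459174027),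
   (14, 2, 3, 1636905254724535804730258292771),
   (14, 2, 4, 56200179352111848995576180248325979769862),
   (14, 3, 3, 54873866907075818103905873860334985222),
   (15, 1, 1, 56938125564509726516312183041275995333248342961940148798678495066398564354),
   (15, 1, 2, 1636984816083936864851679420800),
   (15, 1, 3, 58876844850356736297523166753242353098001811584),
   (15, 1, 4, 56246700989236332614615924687158373491072),
   (15, 1, 5, 1845837457288308026744984855311602335225284992),
   (15, 2, 2, 2224642183607190131420086535971950806261264681965907645631498593561054348),
   (15, 2, 3, 54626991678019510155709240796216658949),
   (15, 2, 4, 58930158974382373919155797007855158949103799302),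
   (15, 3, 3, 1841250586607673272490935519415049888261611526),
   (15, 3, 4, 1667864827856569870334664194141949566944608),
   (16, 1, 1, 412239463665054963318322394532317414312169441584294288151037483037577525237621869444751634947818663449897793888733429686397571175746674685118610928946297752746325004099143794340284709278708549990097620314440662797874040100101920488749997546571864910253410223216870947719157327826177469442),
   (16, 1, 2, 4543680650058572324043274488660175021171057579131773061461872213178384598578866991456785768156133660986462225540499262916707216716911470680556601023376800),
   (16, 1, 3, 238913401938184600035495281862636217496025594021459633322643788718382579931640997326925736658632212818361242903333967628441369900595700662966154279027675078754554385449521651792248738030466968559038137629333972253378916),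
   (16, 1, 4, 6039869035662412441177808572565373521393294836453320725484215745008462054804425754608309664368003627544043579847337622199682327578435659427314506690390303854008909619851139475577691591224736),
   (16, 1, 5, 207219493655088826228923700033328111774656506287730491075083737884122153700214425936061634143628288298333400295142793702279673104466891284908570702356285141580850205427891341940180416237563484635934112),
   (16, 2, 2, 11997748778818952936337614331185191913055802216231032412694558371315031145230820589647003434583682913429392026443534067926682476867487966677851304073817655522907806483816470112958732591279391378895322674216840291406761052022135664186354437978205499165415895223004854650386127235),
   (16, 2, 3, 4996062579600070148643234117760026865875718608531147241352746152733588932958241416368304093124858148925951516608317784541213477970165428162113191986191460272965822627),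
   (16, 2, 4, 8221413909496085316020464167419262696646979521010653630444359223923281614579539800535071017955832813413991728619963481863913446276277875196101571348603026308989759871488528306353374516254938441778679140214871784483840714539642912),
   (16, 2, 5, 222846730350553282712864242963566384028592797952333071261009340643411716483756571188605782513173647378861248251504764630943626128917940677154044117728461187025287869970934503607011310793426467925985758989658339),
   (16, 3, 3, 200309364499308393629419467407480205235934692047602931378781885261969120312348253013503205089778352493118214660164520591845545186540939111212643133272704944376229689918933309627857416845878637716520064158313317861172226),
   (16, 3, 4, 5898703804919831156427302105380782470300820166389827801285963128317708975336259473460608448883532647072789764584960724115837939243518021597409905383058102638686546700164934619272291130370),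
   (16, 4, 4, 8216271226852431187434358813972617732908040274419677103652926912013594190668563089521547995170976081101256184465621639005077499446950648541574518741190297835509594013356734068695538848362118530891276916154620516561712660406807872),
   (17, 1, 1, 34881709663803075541229914512899614235614465034578228463135982551046872250106648010575515607685387253371451611645620601928890637666768549428231631566688486621778467792361253998904147792133630868508798250053166132197858076964740661188122041459115442041663247221658488438593827349049908206545531598867393595096073679497460076935788346913818855095664871368017423549909456492291286127025413447045834950948913008619522),
   (17, 1, 2, 197954075342362715124725519495270277456548719031474570559689175858112433602057151419184706193823658464901718732430323217687126057027365394704407801763813807506063031175207142263364708057753072064),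
   (17, 1, 3, 374920882481903318477994393792631921775258817065114202134089011579469895160657265014393020234945803568085386553914429990035160742347198787133613779753376665961233055175194554909121308218266144480971018768143675737662700064111676775856464087045878036130977114720383682597925890),
   (17, 1, 4, 282529908725270102259772190002750879552929436719392205299683851428334262784758784660241254084192828140810745967446392485569634878733468748993822178669778197477804295440846461972409087666937779750266326263735202654710963428006747526925660608),
   (17, 1, 5, 13191048781905380728039298344910218085574043329133169868511571278126225997865745887036735181812977911433675519444792858691572767322057542993292645215001909858247214845469470934224996206439052059872888397830232134441900473743407454404606343226067543669604032483484484404372302853799109800384),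
   (17, 1, 6, 11735857767751607023667504684912262139427295209792588388768470293707084023072964178395359816011135920398561959428105025651432811100588491599516884055779579495579916116140449922822303145509596089171995819554802371648582507097548141354158987146640526527169041578450439469576640),
   (17, 2, 2, 25627032998673432976597015300501294759631763392671999245563290727774559219836444870363172688936136558486878635823640073203611775149772110469040582299747187798622047797095685318905904655478277311845053732398562388994378368385068610222722387725994926269488635411089136564664100948102631887781188291575155409108844975897211891944330166449131146055603166301445077425425630763427),
   (17, 2, 3, 212551879492807176107225695144511343091933590917705759326768038600566498610412451007006415378890823944939781150025763434509941520529602415755241952453332240679180240358385853142532461598388635310986767523),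
   (17, 2, 4, 13855245901451747910446392136652727154762785289602551264373319152643385620058190380415942191165967264983933257678994937601546737871469083496567272650671755990541838267104536260399331957217876877746250680196242756187505226131021622556129424089074059294177270263270414319100005984793824584867820576),
   (17, 2, 5, 10179233990221739899739981133439342460475246818122045437375763488561244405843682282139908083615095192471059586513139803166735961772190159527455336739898486032956718844433303409556965778897524763141739145818052045649583129374956809973112975137993812904808675),
   (17, 3, 3, 12305980991141115073574475372847625468759866486826899085963684747216516711352162598429043121776215706942308492498107530057084674071066594868808437576094470975356717642438273461203990480964891820231990966356470978602842483323333740159072431546928258798164505930914486933822127648836),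
   (17, 3, 4, 8420065005855491533440722463282852032648998323582200362023206843304408144013986120300582728346824405932241524341086884918123823434375151401652239720206363135880745535225878637147922498858748056647196736735742165502428728315342006274),
   (17, 3, 5, 358659349004234298313672827100833774551262003450325666237132508557336911741426249907419728552931598047152406941306353486313916408586396202745712507903181188578796875184678484295451765947407592518560226486682899393535021448549028358204688461970290618391353834576990838786),
   (17, 4, 4, 13483712265432707491449036227116066831983390331962097456727926468942746456063195471708073487532777261507906227445907318600242157546667913168422144837301894763029976500107977594334746993116230252735003261596257439514473843375670082968016743019815413402051668701834819282484037280496788758199244893088591182)]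

/-- Search certificates for `runR`: entries `(n, R, k, c)`. -/
def certR : List (ℕ × ℕ × ℕ × ℕ) :=
  [(8, 2, 2, 35), (9, 2, 2, 39), (10, 2, 2, 36961), (10, 2, 3, 37026), (11, 2, 2, 1182817),
   (11, 2, 3, 1184898), (11, 3, 3, 1188), (12, 2, 2, 1454507114), (12, 2, 3, 39025019018),
   (12, 2, 4, 1273664408682), (12, 3, 3, 33824), (13, 2, 2, 47660008555),
   (13, 2, 3, 1250239350923), (13, 2, 4, 40901377461419), (13, 3, 3, 1446250), (13, 3, 4, 1215850),
   (14, 2, 2, 1521715132326725538949099750508), (14, 2, 3, 44852668997403240120342096012),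
   (14, 2, 4, 49192153911688442990422509224006363308),
   (14, 2, 5, 50777183818210750265114342461484968076), (14, 3, 3, 1109533824),
   (14, 3, 4, 1251382667), (14, 4, 4, 1513466053),
   (15, 2, 2, 1663905317520715175434680752108526235911277),
   (15, 2, 3, 1540884524003653339988470017663269153933),
   (15, 2, 4, 1690229538162747254220623561314397340165303545005),
   (15, 2, 5, 1836407923090059231641127283303053574773735770151857357),
   (15, 3, 3, 52123725591742892), (15, 3, 4, 41006546752940), (15, 3, 5, 1348138896265644),
   (15, 4, 4, 43258191045),
   (16, 2, 2, 4205297518826470611475505395345270569799455368113001956854087233267796418865455655023193130646905273482710814998826573499674589324843044436165376096),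
   (16, 2, 3, 106745971666142191202970401407816688606382713146257681609708629808322430081474254417793463805466023449273478325711),
   (16, 2, 4, 3376809474584307123033845453865756981269340695572097249485796939280848961736986430869051722535074092838410998899045563519866226757185710),
   (16, 2, 5, 122080568460841326953585581027909534715519576839399573603718170418481238692112669591611409664174989339518189559900723818816230017057627844286331629774),
   (16, 2, 6, 4755233203321106657576776096265954788130730691772984425098183523993901612513143157814813989013086489103156168024933852510345499641342544162369818839135648415437893670187182),
   (16, 3, 3, 1703653820109098364023466175951), (16, 3, 4, 45088355604124949501257165),
   (16, 3, 5, 46319889666107463448369613), (16, 4, 4, 1751189631959855875218936703762109900),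
   (16, 4, 5, 43383126236903076809647211896119526),
   (17, 2, 2, 10113351711068441134393762687181426109974014853439669138514358160663906099056775792077117737538093761770014380372434495445993194133271412030870567137480717726025163837867132896316235769988139151399268957479609201710545181003771135874745351040516682768838671456),
   (17, 2, 3, 217255885666628791245028043340525592133640234194850862523572398710825485438264109978700106823359346692604814122780781976505216769373711615439454004937166891854002002564859978273539086719504806856305136),
   (17, 2, 4, 7043823341781667315983936265644967312015496873587093750439206235444721538821981995678276379715577842095904026333930706144291243465865626482353693886856568524296411542096482233589059542852595700221973391988247519964096564540060847),
   (17, 2, 5, 248682000663977978537993880884949090681996373318677472035872131590442333647941505173483352377811852410068088472625810082778262417648279054323427713122542259423164483736372640581425099874562940316578439640181949765180993008335350907001779407),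
   (17, 2, 6, 349273113626556609783451139920013453210988365493535695871297161635887582569516895947860116134664043511612501889218770370602626826743533178644928179698735231004880778573836456732639272802359295253380431887244652461298119639886113052856846834203486067219778680879342491948938608879),
   (17, 3, 3, 73774457372792994025751179972212998385285703524277422208),
   (17, 3, 4, 1979714117718718701300215277869787415398691312),
   (17, 3, 5, 47051280850418086525266529117909373865252656224752),
   (17, 3, 6, 2076137812425170545177631489473282383827844843406735856),
   (17, 4, 4, 2026451958743042593729445828990581772378604075405415816389),
   (17, 4, 5, 46371493422931350202486396870024670551236), (17, 5, 5, 51016841644)]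

/-- Search certificates for `runL`: entries `(j, c)`. -/
def certL : List (ℕ × ℕ) :=
  [(3, 32), (4, 1058), (5, 33859), (6, 36543988740), (7, 41578466581373027333),
   (8, 55412429836401552857899240156511100662870627935852760070)]

theorem certT_all :
    certT.all (fun x => Nat.beq (runT x.1 x.2.1 x.2.2.1 x.2.2.2) 1) = true := by
  decide +kernel

theorem certR_all :
    certR.all (fun x => Nat.beq (runR x.1 x.2.1 x.2.2.1 x.2.2.2) 1) = true := by
  decide +kernel

theorem certL_all : certL.all (fun x => Nat.beq (runL x.1 x.2) 1) = true := by
  decide +kernel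

theorem exists_runT_eq_one : ∀ n < 18, ∀ b < 18, ∀ a < 18, 1 ≤ a → a ≤ b → 2 * b + a + 4 ≤ n →
    ∃ c, runT n a b c = 1 := by
  have h : ∀ n ∈ List.range 18, ∀ b ∈ List.range 18, ∀ a ∈ List.range 18,
      1 ≤ a → a ≤ b → 2 * b + a + 4 ≤ n → ∃ x ∈ certT, x.1 = n ∧ x.2.1 = a ∧ x.2.2.1 = b := by
    decide +kernel
  intro n hn b hb a ha h1 h2 h3
  obtain ⟨x, hx, rfl, rfl, rfl⟩ :=
    h n (List.mem_range.2 hn) b (List.mem_range.2 hb) a (List.mem_range.2 ha) h1 h2 h3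
  exact ⟨_, Nat.eq_of_beq_eq_true (List.all_eq_true.1 certT_all x hx)⟩

theorem exists_runR_eq_one : ∀ n < 18, ∀ k < 18, ∀ R < 18, 2 ≤ R → R ≤ k → 2 * k + R + 2 ≤ n →
    ∃ c, runR n R k c = 1 := by
  have h : ∀ n ∈ List.range 18, ∀ k ∈ List.range 18, ∀ R ∈ List.range 18,
      2 ≤ R → R ≤ k → 2 * k + R + 2 ≤ n → ∃ x ∈ certR, x.1 = n ∧ x.2.1 = R ∧ x.2.2.1 = k := by
    decide +kernel
  intro n hn k hk R hR h1 h2 h3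
  obtain ⟨x, hx, rfl, rfl, rfl⟩ :=
    h n (List.mem_range.2 hn) k (List.mem_range.2 hk) R (List.mem_range.2 hR) h1 h2 h3
  exact ⟨_, Nat.eq_of_beq_eq_true (List.all_eq_true.1 certR_all x hx)⟩

theorem exists_runL_eq_one : ∀ j < 9, 3 ≤ j → ∃ c, runL j c = 1 := by
  have h : ∀ j < 9, 3 ≤ j → ∃ x ∈ certL, x.1 = j := by
    decide +kernel
  intro j hj h1
  obtain ⟨x, hx, rfl⟩ := h j hj h1
  exact ⟨_, Nat.eq_of_beq_eq_true (List.all_eq_true.1 certL_all x hx)⟩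

section Graph

variable {V : Type} {G : SimpleGraph V} {n R : ℕ} {f : ℕ → V}

theorem eq_of_adj_of_ncard_le_three {v a b c d : V} (h : (G.neighborSet v).ncard = 2 ∨
    (G.neighborSet v).ncard = 3) (ha : G.Adj v a) (hb : G.Adj v b) (hc : G.Adj v c)
    (hd : G.Adj v d) (hab : a ≠ b) (hac : a ≠ c) (hbc : b ≠ c) : d = a ∨ d = b ∨ d = c := by
  by_contra hne
  push Not at hne
  have hfin : (G.neighborSet v).Finite := Set.finite_of_ncard_pos (by omega)
  have hsub : ({d, a, b, c} : Set V) ⊆ G.neighborSet v := by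
    rintro x (rfl | rfl | rfl | rfl) <;> assumption
  have h1 := Set.ncard_le_ncard hsub hfin
  rw [Set.ncard_insert_of_notMem (by simpa using hne),
    Set.ncard_insert_of_notMem (by simpa using ⟨hab, hac⟩), Set.ncard_pair hbc] at h1
  omega

theorem eq_of_adj_of_ncard_eq_two {v a b c : V} (h : (G.neighborSet v).ncard = 2)
    (ha : G.Adj v a) (hb : G.Adj v b) (hc : G.Adj v c) : a = b ∨ a = c ∨ b = c := by
  obtain ⟨y, z, -, hyz⟩ := Set.ncard_eq_two.1 h
  have hmem : ∀ w, G.Adj v w → w = y ∨ w = z := fun w hw => by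
    have : w ∈ G.neighborSet v := hw
    simpa [hyz] using this
  rcases hmem a ha with rfl | rfl <;> rcases hmem b hb with rfl | rfl <;>
    rcases hmem c hc with rfl | rfl <;> simp

theorem exists_adj_ne_ne {v : V} (h : (G.neighborSet v).ncard = 3) (a b : V) :
    ∃ c, G.Adj v c ∧ c ≠ a ∧ c ≠ b := by
  by_contra! hne
  have hsub : G.neighborSet v ⊆ {a, b} := fun c hc => by
    by_cases hca : c = a
    · exact Or.inl hca
    · exact Or.inr (hne c hc hca)
  have h1 := Set.ncard_le_ncard hsub
  have h2 := Set.ncard_insert_le a {b}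
  rw [Set.ncard_singleton] at h2
  omega

/-- `f 0, …, f (n - 1)` is a hamiltonian path of `G`. -/
structure IsHam (G : SimpleGraph V) (n : ℕ) (f : ℕ → V) : Prop where
  inj : ∀ i < n, ∀ j < n, f i = f j → i = j
  surj : ∀ v, ∃ i < n, f i = v
  adj : ∀ i, i + 1 < n → G.Adj (f i) (f (i + 1))

theorem IsHam.adj_sub_one (hf : IsHam G n f) {i : ℕ} (hi : 0 < i) (hin : i < n) :
    G.Adj (f i) (f (i - 1)) := by
  have := hf.adj (i - 1) (by omega)
  rw [Nat.sub_add_cancel hi] at this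
  exact this.symm

theorem IsHam.reindex (hf : IsHam G n f) (σ : ℕ → ℕ) (hlt : ∀ i < n, σ i < n)
    (hinj : ∀ i < n, ∀ j < n, σ i = σ j → i = j)
    (hadj : ∀ i, i + 1 < n → G.Adj (f (σ i)) (f (σ (i + 1)))) :
    IsHam G n (fun i => f (σ i)) := by
  refine ⟨fun i hi j hj h => hinj i hi j hj (hf.inj _ (hlt i hi) _ (hlt j hj) h), fun v => ?_, hadj⟩
  obtain ⟨k, hk, rfl⟩ := hf.surj v
  have hsub : (Finset.range n).image σ ⊆ Finset.range n := fun j hj => by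
    obtain ⟨i, hi, rfl⟩ := Finset.mem_image.1 hj
    exact Finset.mem_range.2 (hlt i (Finset.mem_range.1 hi))
  have himage := Finset.eq_of_subset_of_card_le hsub (by
    rw [Finset.card_image_of_injOn fun i hi j hj h => hinj i (Finset.mem_range.1 hi) j
      (Finset.mem_range.1 hj) h])
  have hk' : k ∈ (Finset.range n).image σ := by
    rw [himage]
    exact Finset.mem_range.2 hk
  obtain ⟨i, hi, rfl⟩ := Finset.mem_image.1 hk'
  exact ⟨i, Finset.mem_range.1 hi, rfl⟩

theorem IsHam.reverse (hf : IsHam G n f) : IsHam G n (fun i => f (n - 1 - i)) := by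
  refine hf.reindex (fun i => n - 1 - i) (fun i hi => by omega) (fun i hi j hj h => by omega)
    fun i hi => ?_
  have := hf.adj_sub_one (i := n - 1 - i) (by omega) (by omega)
  rwa [show n - 1 - i - 1 = n - 1 - (i + 1) by omega] at this

/-- If `f 0` and `f m` are adjacent, the first `m` vertices of the path can be reversed. -/
theorem IsHam.rotate (hf : IsHam G n f) {m : ℕ} (hm : m < n) (h : G.Adj (f 0) (f m)) :
    IsHam G n (fun i => f (if i < m then m - 1 - i else i)) := by
  refine hf.reindex (fun i => if i < m then m - 1 - i else i) (fun i hi => ?_)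
    (fun i hi j hj h => ?_) fun i hi => ?_
  · split_ifs <;> omega
  · split_ifs at h <;> omega
  · by_cases h1 : i + 1 < m
    · rw [if_pos h1, if_pos (by omega)]
      have := hf.adj_sub_one (i := m - 1 - i) (by omega) (by omega)
      rwa [show m - 1 - i - 1 = m - 1 - (i + 1) by omega] at this
    rw [if_neg h1]
    by_cases h2 : i < m
    · rw [if_pos h2, show m - 1 - i = 0 by omega, show i + 1 = m by omega]
      exact h
    · rw [if_neg h2]
      exact hf.adj i hi

/-- The graph `G`, with vertices numbered along a hamiltonian path `f`. -/
def pathAdj (G : SimpleGraph V) (n : ℕ) (f : ℕ → V) (i j : ℕ) : Prop :=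
  i < n ∧ j < n ∧ G.Adj (f i) (f j)

theorem IsHam.of_hamList (hf : IsHam G n f) {l : List ℕ} (hl : HamList n (pathAdj G n f) l) :
    IsHam G n (fun i => f (l.getD i 0)) := by
  have hlen := hl.length
  refine hf.reindex (fun i => l.getD i 0) (fun i hi => ?_) (fun i hi j hj h => ?_) fun i hi => ?_
  · rw [List.getD_eq_getElem _ _ (by omega)]
    exact hl.lt _ (List.getElem_mem _)
  · rw [List.getD_eq_getElem _ _ (by omega), List.getD_eq_getElem _ _ (by omega)] at h
    exact (hl.nodup.getElem_inj_iff).1 h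
  · rw [List.getD_eq_getElem _ _ (by omega), List.getD_eq_getElem _ _ (by omega)]
    exact (List.isChain_iff_getElem.1 hl.chain i (by omega)).2.2

/-- The positions of the vertices of degree two on the path `f`. -/
noncomputable def lowPositions (G : SimpleGraph V) (n : ℕ) (f : ℕ → V) : Finset ℕ :=
  (Finset.range n).filter fun i => (G.neighborSet (f i)).ncard = 2

theorem mem_lowPositions {i : ℕ} :
    i ∈ lowPositions G n f ↔ i < n ∧ (G.neighborSet (f i)).ncard = 2 := by
  simp [lowPositions]

theorem IsHam.card_lowPositions (hf : IsHam G n f) :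
    (lowPositions G n f).card = Set.ncard {v : V | (G.neighborSet v).ncard = 2} := by
  classical
  have himage : {v : V | (G.neighborSet v).ncard = 2} = ((lowPositions G n f).image f : Finset V) := by
    ext v
    simp only [Set.mem_ofPred_eq, Finset.coe_image, Set.mem_image, Finset.mem_coe, mem_lowPositions]
    constructor
    · intro hv
      obtain ⟨i, hi, rfl⟩ := hf.surj v
      exact ⟨i, ⟨hi, hv⟩, rfl⟩
    · rintro ⟨i, ⟨-, hi⟩, rfl⟩
      exact hi
  rw [himage, Set.ncard_coe_finset, Finset.card_image_of_injOn]
  intro i hi j hj h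
  exact hf.inj i (mem_lowPositions.1 hi).1 j (mem_lowPositions.1 hj).1 h

theorem IsHam.card_eq [Fintype V] (hf : IsHam G n f) : Fintype.card V = n := by
  rw [← Fintype.card_fin n]
  refine (Fintype.card_of_bijective (f := fun i : Fin n => f i) ⟨fun i j h => ?_, fun v => ?_⟩).symm
  · exact Fin.ext (hf.inj i i.2 j j.2 h)
  · obtain ⟨i, hi, rfl⟩ := hf.surj v
    exact ⟨⟨i, hi⟩, rfl⟩

/-- A counterexample to the theorem. -/
structure Counterexample (G : SimpleGraph V) (n : ℕ) : Prop where
  le : n ≤ 17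
  deg : ∀ v : V, (G.neighborSet v).ncard = 2 ∨ (G.neighborSet v).ncard = 3
  two_le : 2 ≤ Set.ncard {v : V | (G.neighborSet v).ncard = 2}
  cut : ∀ v : V, ¬ (G.induce ({v}ᶜ : Set V)).Connected →
      ∀ C : (G.induce ({v}ᶜ : Set V)).ConnectedComponent,
        ∃ w : ({v}ᶜ : Set V),
          (G.induce ({v}ᶜ : Set V)).connectedComponentMk w = C ∧
          (G.neighborSet (w : V)).ncard = 2
  ne_two : ∀ f, IsHam G n f → (G.neighborSet (f 0)).ncard ≠ 2

theorem Counterexample.lt_card [Fintype V] (hG : Counterexample G n) (hcard : Fintype.card V = n) :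
    1 + n % 2 < Set.ncard {v : V | (G.neighborSet v).ncard = 2} := by
  classical
  have h2 := hG.two_le
  have hodd := G.even_card_odd_degree_vertices
  have hfilter : (Finset.univ.filter fun v => Odd (G.degree v)) =
      Finset.univ.filter fun v => ¬ (G.neighborSet v).ncard = 2 := by
    refine Finset.filter_congr fun v _ => ?_
    have hd : G.degree v = (G.neighborSet v).ncard := by
      rw [← G.card_neighborSet_eq_degree, Set.ncard_eq_toFinset_card', Set.toFinset_card]
    rw [hd]
    rcases hG.deg v with h | h <;> rw [h] <;> decide
  rw [hfilter] at hodd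
  have hsum := Finset.card_filter_add_card_filter_not (s := (Finset.univ : Finset V))
    (fun v => (G.neighborSet v).ncard = 2)
  rw [Finset.card_univ, hcard] at hsum
  have hset : Set.ncard {v : V | (G.neighborSet v).ncard = 2} =
      (Finset.univ.filter fun v => (G.neighborSet v).ncard = 2).card := by
    rw [← Set.ncard_coe_finset]
    simp
  rw [hset] at h2 ⊢
  rw [Nat.even_iff] at hodd
  omega

theorem Counterexample.obstruction [Fintype V] (hG : Counterexample G n) (hf : IsHam G n f)
    (hR : ∀ g, IsHam G n g → ∀ j < n, G.Adj (g 0) (g j) → j + R < n) :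
    Obstruction n (1 + n % 2) R n (pathAdj G n f) (lowPositions G n f) where
  le := hG.le.trans (by norm_num)
  symm := fun a b h => ⟨h.2.1, h.1, h.2.2.symm⟩
  irrefl := fun a h => G.irrefl h.2.2
  lt := fun a b h => h.2.1
  le_three := fun v a b c d ha hb hc hd hab hac hbc => by
    have hinj : ∀ i j, i < n → j < n → i ≠ j → f i ≠ f j := fun i j hi hj h h' =>
      h (hf.inj i hi j hj h')
    rcases eq_of_adj_of_ncard_le_three (hG.deg _) ha.2.2 hb.2.2 hc.2.2 hd.2.2
      (hinj _ _ ha.2.1 hb.2.1 hab) (hinj _ _ ha.2.1 hc.2.1 hac) (hinj _ _ hb.2.1 hc.2.1 hbc)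
      with h | h | h
    · exact Or.inl (hf.inj _ hd.2.1 _ ha.2.1 h)
    · exact Or.inr (Or.inl (hf.inj _ hd.2.1 _ hb.2.1 h))
    · exact Or.inr (Or.inr (hf.inj _ hd.2.1 _ hc.2.1 h))
  card := hf.card_lowPositions ▸ hG.lt_card hf.card_eq
  lt_of_mem := fun i hi => (mem_lowPositions.1 hi).1
  two := fun i hi a b c ha hb hc => by
    rcases eq_of_adj_of_ncard_eq_two (mem_lowPositions.1 hi).2 ha.2.2 hb.2.2 hc.2.2 with h | h | h
    · exact Or.inl (hf.inj _ ha.2.1 _ hb.2.1 h)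
    · exact Or.inr (Or.inl (hf.inj _ ha.2.1 _ hc.2.1 h))
    · exact Or.inr (Or.inr (hf.inj _ hb.2.1 _ hc.2.1 h))
  three := fun v hv hvF _ a b => by
    have h3 := (hG.deg (f v)).resolve_left fun h => hvF (mem_lowPositions.2 ⟨hv, h⟩)
    obtain ⟨y, hy, hya, hyb⟩ := exists_adj_ne_ne h3 (f a) (f b)
    obtain ⟨c, hc, rfl⟩ := hf.surj y
    exact ⟨c, ⟨hv, hc, hy⟩, fun h => hya (h ▸ rfl), fun h => hyb (h ▸ rfl)⟩
  path := fun q p u hl hq hu _ => by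
    have hg := hf.of_hamList hl
    have hlen := hl.length
    have hlast : (q ++ p).getLast? = some u := by
      rw [List.getLast?_append, hu]
      rfl
    have hpos : 0 < n := by
      rw [← hlen, List.length_pos_iff]
      rintro h
      simp [h] at hlast
    have hu0 : (q ++ p).getD (n - 1) 0 = u := by
      rw [List.getLast?_eq_getElem?, hlen] at hlast
      simp [List.getD_eq_getElem?_getD, hlast]
    refine ⟨fun h => ?_, fun w hw h => ?_, fun d hd h => ?_⟩
    · refine hG.ne_two _ hg.reverse ?_
      simp only [Nat.sub_zero, hu0]
      exact (mem_lowPositions.1 h).2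
    · refine hG.ne_two _ hg ?_
      rw [List.head?_eq_getElem?] at hw
      simp only [List.getD_eq_getElem?_getD, hw, Option.getD_some]
      exact (mem_lowPositions.1 h).2
    · obtain ⟨i, hi, rfl⟩ := List.getElem_of_mem hd
      have hid : (q ++ p).getD i 0 = q[i] := by
        rw [List.getD_eq_getElem _ _ (by simp; omega), List.getElem_append_left]
      have hin : i < n := by
        rw [← hlen, List.length_append]
        omega
      have := hR _ hg.reverse (n - 1 - i) (by omega) (by
        simp only [Nat.sub_zero, hu0, show n - 1 - (n - 1 - i) = i by omega, hid]
        exact h.2.2)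
      omega

theorem Counterexample.not_adj_of_isHam (hG : Counterexample G n) (hf : IsHam G n f) :
    ¬ G.Adj (f 0) (f (n - 1)) := fun h => by
  have hne : {v : V | (G.neighborSet v).ncard = 2}.Nonempty :=
    Set.nonempty_of_ncard_ne_zero (by have := hG.two_le; omega)
  obtain ⟨v, hv⟩ := hne
  obtain ⟨k, hk, rfl⟩ := hf.surj v
  have hg : IsHam G n (fun i => f (if k + i < n then k + i else k + i - n)) := by
    refine hf.reindex (fun i => if k + i < n then k + i else k + i - n) (fun i hi => ?_)
      (fun i hi j hj h => ?_) fun i hi => ?_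
    · split_ifs <;> omega
    · split_ifs at h <;> omega
    · by_cases h1 : k + (i + 1) < n
      · rw [if_pos h1, if_pos (by omega)]
        exact hf.adj (k + i) h1
      rw [if_neg h1]
      by_cases h2 : k + i < n
      · rw [if_pos h2, show k + i = n - 1 by omega, show k + (i + 1) - n = 0 by omega]
        exact h.symm
      · rw [if_neg h2, show k + (i + 1) - n = k + i - n + 1 by omega]
        exact hf.adj _ (by omega)
  refine hG.ne_two _ hg ?_
  simpa [hk] using hv

theorem Counterexample.le_of_adj_last
    (hR : ∀ g, IsHam G n g → ∀ j < n, G.Adj (g 0) (g j) → j + R < n) (hf : IsHam G n f) {k : ℕ}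
    (hk : k < n) (h : G.Adj (f k) (f (n - 1))) : R ≤ k := by
  have := hR _ hf.reverse (n - 1 - k) (by omega) (by
    simp only [Nat.sub_zero, show n - 1 - (n - 1 - k) = k by omega]
    exact h.symm)
  omega

theorem Counterexample.zero_notMem (hG : Counterexample G n) (hf : IsHam G n f) :
    0 ∉ lowPositions G n f := fun h => hG.ne_two f hf (mem_lowPositions.1 h).2

theorem Counterexample.last_notMem (hG : Counterexample G n) (hf : IsHam G n f) :
    n - 1 ∉ lowPositions G n f := fun h => by
  refine hG.ne_two _ hf.reverse ?_
  simpa using (mem_lowPositions.1 h).2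

theorem Counterexample.false_of_overlap [Fintype V] (hG : Counterexample G n) (hR2 : 2 ≤ R)
    (hR : ∀ g, IsHam G n g → ∀ j < n, G.Adj (g 0) (g j) → j + R < n) (hf : IsHam G n f) {k : ℕ}
    (hk : k < n - 1 - R) (h0 : G.Adj (f 0) (f (n - 1 - R))) (h1 : G.Adj (f k) (f (n - 1))) :
    False := by
  have key : ∀ g k, IsHam G n g → 2 * k + R + 2 ≤ n → G.Adj (g 0) (g (n - 1 - R)) →
      G.Adj (g k) (g (n - 1)) → False := by
    intro g k hg hk h0 h1
    have hRk := le_of_adj_last hR hg (by omega) h1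
    have hn := hG.le
    obtain ⟨c, hc⟩ := exists_runR_eq_one n (by omega) k (by omega) R (by omega) hR2 hRk hk
    rw [runR_eq_zero (hG.obstruction hg hR) hR2 hRk hk
      (fun i hi => ⟨by omega, hi, hg.adj i hi⟩) (hG.zero_notMem hg) (hG.last_notMem hg)
      ⟨by omega, by omega, h0⟩ ⟨by omega, by omega, h1⟩] at hc
    exact absurd hc (by norm_num)
  by_cases hk' : 2 * k + R + 2 ≤ n
  · exact key f k hf hk' h0 h1
  · refine key _ (n - 1 - R - 1 - k) (hf.rotate (by omega) h0) (by omega) ?_ ?_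
    · rw [if_pos (by omega), if_neg (by omega)]
      exact (hf.adj_sub_one (by omega) (by omega)).symm
    · rw [if_pos (by omega), if_neg (by omega),
        show n - 1 - R - 1 - (n - 1 - R - 1 - k) = k by omega]
      exact h1

/-- A cycle through all vertices but one, which has neighbours on the cycle separated by gaps of
`a`, `b` and `c` vertices. -/
def IsTripod (G : SimpleGraph V) (n a b c : ℕ) (f : ℕ → V) : Prop :=
  IsHam G n f ∧ a + b + c + 4 = n ∧ G.Adj (f 0) (f (n - 2)) ∧ G.Adj (f a) (f (n - 1)) ∧
    G.Adj (f (a + 1 + b)) (f (n - 1))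

theorem IsTripod.exists_reverse {a b c : ℕ} (h : IsTripod G n a b c f) :
    ∃ g, IsTripod G n c b a g := by
  obtain ⟨hf, hn, h0, h1, h2⟩ := h
  refine ⟨_, hf.rotate (by omega) h0, by omega, ?_, ?_, ?_⟩
  · rw [if_pos (by omega), if_neg (by omega)]
    exact (hf.adj_sub_one (by omega) (by omega)).symm
  · rw [if_pos (by omega), if_neg (by omega), show n - 2 - 1 - c = a + 1 + b by omega]
    exact h2
  · rw [if_pos (by omega), if_neg (by omega), show n - 2 - 1 - (c + 1 + b) = a by omega]
    exact h1

theorem IsTripod.exists_rotate {a b c : ℕ} (h : IsTripod G n a b c f) :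
    ∃ g, IsTripod G n b c a g := by
  obtain ⟨hf, hn, h0, h1, h2⟩ := h
  have hlast := hf.adj (n - 2) (by omega)
  rw [show n - 2 + 1 = n - 1 by omega] at hlast
  have hg : IsHam G n (fun i => f (if i + a + 1 < n - 1 then i + a + 1 else
      if i < n - 1 then i + a + 1 - (n - 1) else i)) := by
    refine hf.reindex (fun i => if i + a + 1 < n - 1 then i + a + 1 else
      if i < n - 1 then i + a + 1 - (n - 1) else i) (fun i hi => ?_)
      (fun i hi j hj h => ?_) fun i hi => ?_
    · split_ifs <;> omega
    · split_ifs at h <;> omega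
    · by_cases e1 : i + 1 + a + 1 < n - 1
      · rw [if_pos e1, if_pos (by omega), show i + 1 + a + 1 = i + a + 1 + 1 by omega]
        exact hf.adj _ (by omega)
      rw [if_neg e1]
      by_cases e2 : i + a + 1 < n - 1
      · rw [if_pos e2, if_pos (by omega), show i + a + 1 = n - 2 by omega,
          show i + 1 + a + 1 - (n - 1) = 0 by omega]
        exact h0.symm
      rw [if_neg e2, if_pos (by omega)]
      by_cases e3 : i + 1 < n - 1
      · rw [if_pos e3, show i + 1 + a + 1 - (n - 1) = i + a + 1 - (n - 1) + 1 by omega]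
        exact hf.adj _ (by omega)
      · rw [if_neg e3, show i + a + 1 - (n - 1) = a by omega, show i + 1 = n - 1 by omega]
        exact h1
  refine ⟨_, hg, by omega, ?_, ?_, ?_⟩
  · rw [if_pos (by omega), if_neg (by omega), if_pos (by omega),
      show n - 2 + a + 1 - (n - 1) = a by omega, zero_add]
    exact (hf.adj a (by omega)).symm
  · rw [if_pos (by omega), if_neg (by omega), if_neg (by omega),
      show b + a + 1 = a + 1 + b by omega]
    exact h2
  · rw [if_pos (by omega), if_neg (by omega), if_neg (by omega),
      show b + 1 + c + a + 1 = n - 2 by omega]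
    exact hlast

theorem Counterexample.false_of_isTripod [Fintype V] (hG : Counterexample G n)
    (hR : ∀ g, IsHam G n g → ∀ j < n, G.Adj (g 0) (g j) → j + 1 < n) {a b c : ℕ}
    (h : IsTripod G n a b c f) : False := by
  have key : ∀ a b c g, a ≤ b → b ≤ c → IsTripod G n a b c g → False := by
    rintro a b c g hab hbc ⟨hg, habc, h0, h1, h2⟩
    have ha := le_of_adj_last hR hg (by omega) h1
    have hn := hG.le
    obtain ⟨c, hc⟩ := exists_runT_eq_one n (by omega) b (by omega) a (by omega) ha hab (by omega)
    rw [runT_eq_zero (hG.obstruction hg hR) ha hab (by omega)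
      (fun i hi => ⟨by omega, hi, hg.adj i hi⟩) (hG.zero_notMem hg)
      ⟨by omega, by omega, h0⟩ ⟨by omega, by omega, h1⟩ ⟨by omega, by omega, h2⟩] at hc
    exact absurd hc (by norm_num)
  have key' : ∀ a b c g, a ≤ b → a ≤ c → IsTripod G n a b c g → False := by
    intro a b c g hab hac hg
    rcases le_total b c with hbc | hbc
    · exact key a b c g hab hbc hg
    · obtain ⟨g', hg'⟩ := hg.exists_rotate
      obtain ⟨g'', hg''⟩ := hg'.exists_reverse
      exact key a c b g'' hac hbc hg''
  obtain ⟨g, hg⟩ := h.exists_rotate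
  obtain ⟨g', hg'⟩ := hg.exists_rotate
  rcases le_total a b with hab | hab <;> rcases le_total b c with hbc | hbc <;>
    rcases le_total a c with hac | hac
  all_goals first
    | exact key' a b c f (by omega) (by omega) h
    | exact key' b c a g (by omega) (by omega) hg
    | exact key' c a b g' (by omega) (by omega) hg'

theorem Counterexample.not_adj_of_forall_adj_le [Fintype V] (hG : Counterexample G n) (hf : IsHam G n f)
    (hR : ∀ g, IsHam G n g → ∀ j < n, G.Adj (g 0) (g j) → j + 1 < n) :
    ¬ G.Adj (f 0) (f (n - 2)) := fun h0 => by
  have h3 := (hG.deg (f (n - 1))).resolve_left fun h => by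
    refine hG.ne_two _ hf.reverse ?_
    simpa using h
  have hpos : 0 < n := by
    obtain ⟨i, hi, -⟩ := hf.surj (f 0)
    omega
  obtain ⟨y, hy, hy1, -⟩ := exists_adj_ne_ne h3 (f (n - 2)) (f (n - 2))
  obtain ⟨z, hz, hz1, hz2⟩ := exists_adj_ne_ne h3 (f (n - 2)) y
  obtain ⟨p, hp, rfl⟩ := hf.surj y
  obtain ⟨q, hq, rfl⟩ := hf.surj z
  have hne : ∀ i, G.Adj (f (n - 1)) (f i) → i ≠ n - 1 := by
    rintro i hi rfl
    exact G.irrefl hi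
  have hp1 := hne p hy
  have hq1 := hne q hz
  have hp2 : p ≠ n - 2 := fun h => hy1 (h ▸ rfl)
  have hq2 : q ≠ n - 2 := fun h => hz1 (h ▸ rfl)
  have hpq : p ≠ q := fun h => hz2 (h ▸ rfl)
  rcases lt_or_gt_of_ne hpq with hlt | hlt
  · refine hG.false_of_isTripod hR (a := p) (b := q - p - 1) (c := n - 3 - q)
      ⟨hf, by omega, h0, hy.symm, ?_⟩
    rw [show p + 1 + (q - p - 1) = q by omega]
    exact hz.symm
  · refine hG.false_of_isTripod hR (a := q) (b := p - q - 1) (c := n - 3 - p)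
      ⟨hf, by omega, h0, hz.symm, ?_⟩
    rw [show q + 1 + (p - q - 1) = p by omega]
    exact hy.symm

theorem mem_of_reachable {H : SimpleGraph V} {P : V → Prop} (hP : ∀ a b, H.Adj a b → P a → P b)
    {a b : V} (h : H.Reachable a b) (ha : P a) : P b := by
  obtain ⟨p⟩ := h
  induction p with
  | nil => exact ha
  | cons hadj _ ih => exact ih (hP _ _ hadj ha)

section Lollipop

variable {J K : ℕ}

/-- The subgraph on the last `j` vertices of the path `f`, numbered from the end, together with
the preceding path edge. -/
def tailAdj (G : SimpleGraph V) (n j : ℕ) (f : ℕ → V) (a b : ℕ) : Prop :=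
  (a < j ∧ b < j ∨ a + 1 = j ∧ b = j ∨ a = j ∧ b + 1 = j) ∧ G.Adj (f (n - 1 - a)) (f (n - 1 - b))

open Classical in
/-- The last vertices of the path `f`, without the first of them, which have degree two or a
neighbour before position `K`. -/
noncomputable def tailLow (G : SimpleGraph V) (n K : ℕ) (f : ℕ → V) : Finset ℕ :=
  (Finset.range (n - K - 1)).filter fun i =>
    (G.neighborSet (f (n - 1 - i))).ncard = 2 ∨ ∃ k < K, G.Adj (f k) (f (n - 1 - i))

theorem mem_tailLow {i : ℕ} : i ∈ tailLow G n K f ↔ i < n - K - 1 ∧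
    ((G.neighborSet (f (n - 1 - i))).ncard = 2 ∨ ∃ k < K, G.Adj (f k) (f (n - 1 - i))) := by
  simp [tailLow]

theorem Counterexample.zero_notMem_tailLow (hG : Counterexample G n) (hf : IsHam G n f)
    (hmin : ∀ k < n, G.Adj (f k) (f (n - 1)) → K ≤ k) : 0 ∉ tailLow G n K f := fun h => by
  rw [mem_tailLow, Nat.sub_zero] at h
  rcases h.2 with h2 | ⟨k, hk, h2⟩
  · refine hG.ne_two _ hf.reverse ?_
    simpa using h2
  · have := hmin k (by omega) h2
    omega

theorem Counterexample.tailLow_nonempty (hG : Counterexample G n) (hf : IsHam G n f)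
    (hK0 : 0 < K) (hKn : K + 1 < n) : (tailLow G n K f).Nonempty := by
  by_contra hemp
  rw [Finset.not_nonempty_iff_eq_empty] at hemp
  have hnot : ∀ i, K < i → i < n → (G.neighborSet (f i)).ncard ≠ 2 ∧ ∀ k < K, ¬ G.Adj (f k) (f i) := by
    intro i hi hin
    have h : n - 1 - i ∉ tailLow G n K f := by simp [hemp]
    rw [mem_tailLow, show n - 1 - (n - 1 - i) = i by omega] at h
    push Not at h
    exact h (by omega)
  set v := f K with hv
  have hmem : ∀ i < n, i ≠ K → f i ∈ ({v}ᶜ : Set V) := fun i hi hiK h =>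
    hiK (hf.inj i hi K (by omega) h)
  have hclosed : ∀ a b : ({v}ᶜ : Set V), (G.induce ({v}ᶜ : Set V)).Reachable a b →
      (∃ i, K < i ∧ i < n ∧ f i = a) → ∃ i, K < i ∧ i < n ∧ f i = b := by
    intro a b hab
    refine mem_of_reachable (P := fun a : ({v}ᶜ : Set V) => ∃ i, K < i ∧ i < n ∧ f i = a) ?_ hab
    rintro a b hab ⟨i, hi, hin, hia⟩
    obtain ⟨k, hk, hkb⟩ := hf.surj b
    have hadj : G.Adj (f i) (f k) := by
      rw [hia, hkb]
      exact hab
    refine ⟨k, ?_, hk, hkb⟩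
    have h1 : ¬ k < K := fun h => (hnot i hi hin).2 k h hadj.symm
    have h2 : k ≠ K := by
      rintro rfl
      exact b.2 hkb.symm
    omega
  have hlast : ∃ i, K < i ∧ i < n ∧ f i = f (n - 1) := ⟨n - 1, by omega, by omega, rfl⟩
  obtain ⟨w, hw, hw2⟩ := hG.cut v (fun hconn => by
    obtain ⟨i, hi, hin, h⟩ := hclosed ⟨f (n - 1), hmem _ (by omega) (by omega)⟩
      ⟨f 0, hmem _ (by omega) (by omega)⟩ (hconn.preconnected _ _) hlast
    have := hf.inj i hin 0 (by omega) h
    omega) ((G.induce ({v}ᶜ : Set V)).connectedComponentMk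
      ⟨f (n - 1), hmem _ (by omega) (by omega)⟩)
  obtain ⟨i, hi, hin, h⟩ := hclosed _ w (SimpleGraph.ConnectedComponent.eq.1 hw).symm hlast
  exact (hnot i hi hin).1 (h ▸ hw2)

theorem Counterexample.tail_path (hG : Counterexample G n) (hf : IsHam G n f) (hJK : J < K)
    (hKn : K + 2 < n) (h0 : G.Adj (f 0) (f J))
    (hmin : ∀ g, IsHam G n g → G.Adj (g 0) (g J) → ∀ k < n, G.Adj (g k) (g (n - 1)) → K ≤ k)
    {l : List ℕ} (hl : HamList (n - K + 1) (tailAdj G n (n - K) f) l) {u : ℕ}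
    (hu : l.getD (n - K) 0 = u) (hun : u ≠ n - K) :
    u ∉ tailLow G n K f ∧ l.getD 0 0 = n - K ∧ ¬ tailAdj G n (n - K) f u (n - K) := by
  have hlen := hl.length
  have hadj : ∀ i, i + 1 < n - K + 1 → tailAdj G n (n - K) f (l.getD i 0) (l.getD (i + 1) 0) :=
    fun i hi => by
      rw [List.getD_eq_getElem _ _ (by omega), List.getD_eq_getElem _ _ (by omega)]
      exact List.isChain_iff_getElem.1 hl.chain i (by omega)
  have hinj : ∀ i k, i < n - K + 1 → k < n - K + 1 → l.getD i 0 = l.getD k 0 → i = k :=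
    fun i k hi hk h => by
      rw [List.getD_eq_getElem _ _ (by omega), List.getD_eq_getElem _ _ (by omega)] at h
      exact (hl.nodup.getElem_inj_iff).1 h
  have hlt : ∀ i < n - K + 1, l.getD i 0 < n - K + 1 := fun i hi => by
    rw [List.getD_eq_getElem _ _ (by omega)]
    exact hl.lt _ (List.getElem_mem _)
  have hzero : l.getD 0 0 = n - K := by
    obtain ⟨i, hi, hil⟩ := List.getElem_of_mem (hl.mem (i := n - K) (by omega))
    rw [← List.getD_eq_getElem _ 0] at hil
    by_cases hi0 : i = 0
    · rwa [hi0] at hil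
    by_cases hij : i = n - K
    · exact absurd (hu.symm.trans (hij ▸ hil)) hun
    have h1 := (hadj (i - 1) (by omega)).1
    have h2 := (hadj i (by omega)).1
    rw [Nat.sub_add_cancel (by omega)] at h1
    have := hinj (i - 1) (i + 1) (by omega) (by omega) (by omega)
    omega
  have hone : l.getD 1 0 = n - K - 1 := by
    have := (hadj 0 (by omega)).1
    rw [zero_add] at this
    omega
  refine ⟨fun huF => ?_, hzero, fun h => ?_⟩
  · have hlt' : ∀ i, 0 < i → i < n - K + 1 → l.getD i 0 < n - K := fun i hi hin => by
      have h1 := hlt i hin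
      have h2 : l.getD i 0 ≠ n - K := fun h => by
        have := hinj i 0 hin (by omega) (h.trans hzero.symm)
        omega
      omega
    have hg : IsHam G n (fun i => f (if i < K then i else n - 1 - l.getD (i - K + 1) 0)) := by
      refine hf.reindex (fun i => if i < K then i else n - 1 - l.getD (i - K + 1) 0)
        (fun i hi => ?_) (fun i hi k hk h => ?_) fun i hi => ?_
      · split_ifs <;> omega
      · split_ifs at h
        · exact h
        · have := hlt' (k - K + 1) (by omega) (by omega)
          omega
        · have := hlt' (i - K + 1) (by omega) (by omega)
          omega
        · have h1 := hlt' (k - K + 1) (by omega) (by omega)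
          have h2 := hlt' (i - K + 1) (by omega) (by omega)
          have := hinj (i - K + 1) (k - K + 1) (by omega) (by omega) (by omega)
          omega
      · by_cases h1 : i + 1 < K
        · rw [if_pos h1, if_pos (by omega)]
          exact hf.adj i hi
        rw [if_neg h1]
        by_cases h2 : i < K
        · rw [if_pos h2, show i + 1 - K + 1 = 1 by omega, hone,
            show n - 1 - (n - K - 1) = i + 1 by omega]
          exact hf.adj i hi
        · rw [if_neg h2, show i + 1 - K + 1 = i - K + 1 + 1 by omega]
          exact (hadj (i - K + 1) (by omega)).2
    have hlast : n - 1 - K + 1 = n - K := by omega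
    rcases (mem_tailLow.1 huF).2 with h2 | ⟨k, hk, h2⟩
    · refine hG.ne_two _ hg.reverse ?_
      simp only [Nat.sub_zero]
      rw [if_neg (by omega), hlast, hu]
      exact h2
    · have := hmin _ hg (by
        rw [if_pos (by omega), if_pos hJK]
        exact h0) k (by omega) (by
        rw [if_pos hk, if_neg (by omega), hlast, hu]
        exact h2)
      omega
  · have h1 := h.1
    have := hinj 1 (n - K) (by omega) (by omega) (by omega)
    omega

theorem Counterexample.tail_obstruction (hG : Counterexample G n) (hf : IsHam G n f) (hJK : J < K)
    (hKn : K + 2 < n) (h0 : G.Adj (f 0) (f J)) (h1 : G.Adj (f K) (f (n - 1)))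
    (hmin : ∀ g, IsHam G n g → G.Adj (g 0) (g J) → ∀ k < n, G.Adj (g k) (g (n - 1)) → K ≤ k) :
    Obstruction (n - K + 1) 0 1 (n - K) (tailAdj G n (n - K) f) (tailLow G n K f) := by
  have hinj : ∀ a b, a < n - K + 1 → b < n - K + 1 → f (n - 1 - a) = f (n - 1 - b) → a = b :=
    fun a b ha hb h => by
      have := hf.inj _ (by omega) _ (by omega) h
      omega
  have hlt : ∀ a b, tailAdj G n (n - K) f a b → b < n - K + 1 := fun a b h => by
    have := h.1
    omega
  have hn := hG.le
  refine ⟨by omega, fun a b h => ⟨by have := h.1; omega, h.2.symm⟩, fun a h => G.irrefl h.2, hlt,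
    fun v a b c d ha hb hc hd hab hac hbc => ?_,
    Finset.card_pos.2 (hG.tailLow_nonempty hf (by omega) (by omega)),
    fun i hi => ?_, fun i hi a b c ha hb hc => ?_, fun v hv hvF hvx a b => ?_,
    fun q p u hl hq hu hux => ?_⟩
  · have hne : ∀ i j, i < n - K + 1 → j < n - K + 1 → i ≠ j → f (n - 1 - i) ≠ f (n - 1 - j) :=
      fun i j hi hj h h' => h (hinj i j hi hj h')
    rcases eq_of_adj_of_ncard_le_three (hG.deg _) ha.2 hb.2 hc.2 hd.2
      (hne _ _ (hlt _ _ ha) (hlt _ _ hb) hab) (hne _ _ (hlt _ _ ha) (hlt _ _ hc) hac)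
      (hne _ _ (hlt _ _ hb) (hlt _ _ hc) hbc) with h | h | h
    · exact Or.inl (hinj _ _ (hlt _ _ hd) (hlt _ _ ha) h)
    · exact Or.inr (Or.inl (hinj _ _ (hlt _ _ hd) (hlt _ _ hb) h))
    · exact Or.inr (Or.inr (hinj _ _ (hlt _ _ hd) (hlt _ _ hc) h))
  · have := (mem_tailLow.1 hi).1
    omega
  · obtain ⟨hi, h2 | ⟨k, hk, h2⟩⟩ := mem_tailLow.1 hi
    · rcases eq_of_adj_of_ncard_eq_two h2 ha.2 hb.2 hc.2 with h | h | h
      · exact Or.inl (hinj _ _ (hlt _ _ ha) (hlt _ _ hb) h)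
      · exact Or.inr (Or.inl (hinj _ _ (hlt _ _ ha) (hlt _ _ hc) h))
      · exact Or.inr (Or.inr (hinj _ _ (hlt _ _ hb) (hlt _ _ hc) h))
    · by_contra hne
      push Not at hne
      have ha1 := ha.1
      have hb1 := hb.1
      have hc1 := hc.1
      have hnek : ∀ y, y < n - K → f k ≠ f (n - 1 - y) := fun y hy h => by
        have := hf.inj _ (by omega) _ (by omega) h
        omega
      rcases eq_of_adj_of_ncard_le_three (hG.deg _) ha.2 hb.2 hc.2 h2.symm
        (fun h => hne.1 (hinj _ _ (hlt _ _ ha) (hlt _ _ hb) h))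
        (fun h => hne.2.1 (hinj _ _ (hlt _ _ ha) (hlt _ _ hc) h))
        (fun h => hne.2.2 (hinj _ _ (hlt _ _ hb) (hlt _ _ hc) h)) with h | h | h
      · exact hnek a (by omega) h
      · exact hnek b (by omega) h
      · exact hnek c (by omega) h
  · by_cases hvK : v = n - K - 1
    · have hK := hf.adj_sub_one (i := K) (by omega) (by omega)
      have hK' := hf.adj K (by omega)
      have hvv : n - 1 - v = K := by omega
      have a1 : tailAdj G n (n - K) f v (n - K) := ⟨by omega, by
        rw [hvv, show n - 1 - (n - K) = K - 1 by omega]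
        exact hK⟩
      have a2 : tailAdj G n (n - K) f v (n - K - 2) := ⟨by omega, by
        rw [hvv, show n - 1 - (n - K - 2) = K + 1 by omega]
        exact hK'⟩
      have a3 : tailAdj G n (n - K) f v 0 := ⟨by omega, by
        rw [hvv]
        exact h1⟩
      by_cases e1 : n - K ≠ a ∧ n - K ≠ b
      · exact ⟨_, a1, e1⟩
      by_cases e2 : n - K - 2 ≠ a ∧ n - K - 2 ≠ b
      · exact ⟨_, a2, e2⟩
      · exact ⟨0, a3, by omega, by omega⟩
    · rw [mem_tailLow] at hvF
      push Not at hvF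
      obtain ⟨hv2, hvk⟩ := hvF (by omega)
      obtain ⟨y, hy, hya, hyb⟩ := exists_adj_ne_ne ((hG.deg _).resolve_left hv2)
        (f (n - 1 - a)) (f (n - 1 - b))
      obtain ⟨i, hi, rfl⟩ := hf.surj y
      have hiK : ¬ i < K := fun h => hvk i h hy.symm
      have hii : n - 1 - (n - 1 - i) = i := by omega
      refine ⟨n - 1 - i, ⟨by omega, by rwa [hii]⟩, ?_, ?_⟩
      · rintro rfl
        exact hya (by rw [hii])
      · rintro rfl
        exact hyb (by rw [hii])
  · have hlast : (q ++ p).getLast? = some u := by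
      rw [List.getLast?_append, hu]
      rfl
    have hu0 : (q ++ p).getD (n - K) 0 = u := by
      rw [List.getLast?_eq_getElem?, hl.length, Nat.add_sub_cancel] at hlast
      simp [List.getD_eq_getElem?_getD, hlast]
    obtain ⟨hp1, hp2, hp3⟩ := hG.tail_path hf hJK hKn h0 hmin hl hu0 hux
    obtain ⟨d, rfl⟩ := List.length_eq_one_iff.1 hq
    obtain rfl : d = n - K := by simpa using hp2
    refine ⟨hp1, fun w hw => ?_, fun d hd => ?_⟩
    · obtain rfl : n - K = w := by simpa using hw
      rw [mem_tailLow]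
      omega
    · obtain rfl : d = n - K := by simpa using hd
      exact hp3

theorem Counterexample.false_of_lollipop (hG : Counterexample G n) (hf : IsHam G n f) (hJK : J < K)
    (hKn : K < n) (hK8 : n - K ≤ 8) (h0 : G.Adj (f 0) (f J)) (h1 : G.Adj (f K) (f (n - 1)))
    (hmin : ∀ g, IsHam G n g → G.Adj (g 0) (g J) → ∀ k < n, G.Adj (g k) (g (n - 1)) → K ≤ k) :
    False := by
  have h3 := (hG.deg (f (n - 1))).resolve_left fun h => by
    refine hG.ne_two _ hf.reverse ?_
    simpa using h
  obtain ⟨y, hy, hyK, hyn⟩ := exists_adj_ne_ne h3 (f K) (f (n - 2))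
  obtain ⟨k, hk, rfl⟩ := hf.surj y
  have hkK := hmin f hf h0 k hk hy.symm
  have hk1 : k ≠ n - 1 := by
    rintro rfl
    exact G.irrefl hy
  have hk2 : k ≠ K := fun h => hyK (h ▸ rfl)
  have hk3 : k ≠ n - 2 := fun h => hyn (h ▸ rfl)
  obtain ⟨c, hc⟩ := exists_runL_eq_one (n - K) (by omega) (by omega)
  refine absurd (hc.symm.trans (runL_eq_zero (hG.tail_obstruction hf hJK (by omega) h0 h1 hmin)
    (by omega) (fun i hi => ⟨by omega, ?_⟩) (hG.zero_notMem_tailLow hf (hmin f hf h0)) ?_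
    ⟨by omega, ?_⟩ (fun i hi => ?_) c)) (by norm_num)
  · have := hf.adj_sub_one (i := n - 1 - i) (by omega) (by omega)
    rwa [show n - 1 - i - 1 = n - 1 - (i + 1) by omega] at this
  · rw [mem_tailLow]
    omega
  · rw [show n - 1 - (n - K - 1) = K by omega]
    exact h1.symm
  · have := hi.1
    omega

end Lollipop

theorem Counterexample.not_isHam [Fintype V] (hG : Counterexample G n) : ¬ IsHam G n f := by
  classical
  intro hf
  have hpos : 0 < n := by
    obtain ⟨i, hi, -⟩ := hf.surj (f 0)
    omega
  let P : ℕ → Prop := fun j => ∃ g, IsHam G n g ∧ j < n ∧ G.Adj (g 0) (g j)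
  have hex : ∃ j, P j := by
    obtain ⟨y, hy, -⟩ := exists_adj_ne_ne ((hG.deg (f 0)).resolve_left (hG.ne_two f hf)) (f 0) (f 0)
    obtain ⟨j, hj, rfl⟩ := hf.surj y
    exact ⟨j, f, hf, hj, hy⟩
  obtain ⟨j₀, hj₀⟩ := hex
  obtain ⟨J, hJ⟩ : ∃ J, J = Nat.findGreatest P n := ⟨_, rfl⟩
  have hPJ : P J := hJ ▸ Nat.findGreatest_spec (P := P) (by
    obtain ⟨-, -, h, -⟩ := hj₀
    omega) hj₀
  have hmax : ∀ g, IsHam G n g → ∀ j < n, G.Adj (g 0) (g j) → j ≤ J := fun g hg j hj h =>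
    hJ ▸ Nat.le_findGreatest hj.le ⟨g, hg, hj, h⟩
  obtain ⟨f₁, hf₁, hJn, hf₁J⟩ := hPJ
  have hJ1 : J ≠ n - 1 := fun h => hG.not_adj_of_isHam hf₁ (h ▸ hf₁J)
  have hJ2 : J ≠ n - 2 := fun h => hG.not_adj_of_forall_adj_le hf₁ (fun g hg j hj h' => by
    have := hmax g hg j hj h'
    omega) (h ▸ hf₁J)
  let Q : ℕ → Prop := fun k => ∃ g, IsHam G n g ∧ G.Adj (g 0) (g J) ∧ k < n ∧ G.Adj (g k) (g (n - 1))
  have hQ : ∃ k, Q k := ⟨n - 2, f₁, hf₁, hf₁J, by omega, by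
    have := hf₁.adj (n - 2) (by omega)
    rwa [show n - 2 + 1 = n - 1 by omega] at this⟩
  obtain ⟨K, hK⟩ : ∃ K, K = Nat.find hQ := ⟨_, rfl⟩
  obtain ⟨g, hg, hgJ, hKn, hgK⟩ : Q K := hK ▸ Nat.find_spec hQ
  have hmin : ∀ g, IsHam G n g → G.Adj (g 0) (g J) → ∀ k < n, G.Adj (g k) (g (n - 1)) → K ≤ k :=
    fun g hg hgJ k hk h => hK ▸ Nat.find_min' hQ ⟨g, hg, hgJ, hk, h⟩
  have hR : ∀ g, IsHam G n g → ∀ j < n, G.Adj (g 0) (g j) → j + (n - 1 - J) < n :=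
    fun g hg j hj h => by
      have := hmax g hg j hj h
      omega
  rcases lt_trichotomy K J with hlt | rfl | hlt
  · refine hG.false_of_overlap (R := n - 1 - J) (by omega) hR hg (k := K) (by omega) ?_ hgK
    rwa [show n - 1 - (n - 1 - J) = J by omega]
  · have hK0 : K ≠ 0 := by
      rintro rfl
      exact G.irrefl hgJ
    have h1 := hg.adj K (by omega)
    have h2 := hg.adj_sub_one (i := K) (by omega) hKn
    have hne : ∀ i j, i < n → j < n → i ≠ j → g i ≠ g j := fun i j hi hj h h' =>
      h (hg.inj i hi j hj h')
    have hK1 : K ≠ 1 := by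
      rintro rfl
      have h3 := (hG.deg (g 0)).resolve_left (hG.ne_two g hg)
      obtain ⟨y, hy, hy1, -⟩ := exists_adj_ne_ne h3 (g 1) (g 1)
      obtain ⟨j, hj, rfl⟩ := hg.surj y
      have := hmax g hg j hj hy
      have hj1 : j ≠ 1 := fun h => hy1 (h ▸ rfl)
      obtain rfl : j = 0 := by omega
      exact G.irrefl hy
    rcases eq_of_adj_of_ncard_le_three (hG.deg _) h1 h2 hgJ.symm hgK
      (hne _ _ (by omega) (by omega) (by omega)) (hne _ _ (by omega) (by omega) (by omega))
      (hne _ _ (by omega) (by omega) (by omega)) with h | h | h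
    · exact hne _ _ (by omega) (by omega) (by omega) h
    · exact hne _ _ (by omega) (by omega) (by omega) h
    · exact hne _ _ (by omega) (by omega) (by omega) h
  · have hK8 := le_of_adj_last hR hg hKn hgK
    have hn := hG.le
    exact hG.false_of_lollipop hg hlt hKn (by omega) hgJ hgK hmin

theorem IsHam.of_isPath {u v : V} {p : G.Walk u v} (hp : p.IsPath) (hall : ∀ x, x ∈ p.support) :
    IsHam G p.support.length (fun i => p.support.getD i u) := by
  refine ⟨fun i hi j hj h => ?_, fun x => ?_, fun i hi => ?_⟩
  · rw [List.getD_eq_getElem _ _ hi, List.getD_eq_getElem _ _ hj] at h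
    exact (hp.support_nodup.getElem_inj_iff).1 h
  · obtain ⟨i, hi, rfl⟩ := List.getElem_of_mem (hall x)
    exact ⟨i, hi, List.getD_eq_getElem _ _ hi⟩
  · rw [List.getD_eq_getElem _ _ hi, List.getD_eq_getElem _ _ (by omega)]
    exact List.isChain_iff_getElem.1 p.isChain_adj_support i hi

theorem IsHam.exists_isPath (hf : IsHam G n f) :
    ∃ (v : V) (p : G.Walk (f 0) v), p.IsPath ∧ ∀ x, x ∈ p.support := by
  have hpos : 0 < n := by
    obtain ⟨i, hi, -⟩ := hf.surj (f 0)
    omega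
  have hne : (List.range n).map f ≠ [] := by simp; omega
  have hchain : ((List.range n).map f).IsChain G.Adj := by
    rw [List.isChain_iff_getElem]
    intro i hi
    simp only [List.length_map, List.length_range] at hi
    simpa using hf.adj i hi
  have hhead : ((List.range n).map f).head hne = f 0 := by
    rw [List.head_eq_getElem]
    simp
  refine ⟨_, (SimpleGraph.Walk.ofSupport _ hne hchain).copy hhead rfl, ?_, fun x => ?_⟩
  · rw [SimpleGraph.Walk.isPath_copy, SimpleGraph.Walk.isPath_def,
      SimpleGraph.Walk.support_ofSupport]
    exact List.Nodup.map_on (fun i hi j hj h => hf.inj i (List.mem_range.1 hi) j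
      (List.mem_range.1 hj) h) List.nodup_range
  · rw [SimpleGraph.Walk.support_copy, SimpleGraph.Walk.support_ofSupport, List.mem_map]
    obtain ⟨i, hi, rfl⟩ := hf.surj x
    exact ⟨i, List.mem_range.2 hi, rfl⟩

end Graph

end HamSearch

theorem stmt_4 {V : Type} [Fintype V] (G : SimpleGraph V)
    (hcard : Fintype.card V ≤ 17)
    (hdeg : ∀ v : V, (G.neighborSet v).ncard = 2 ∨ (G.neighborSet v).ncard = 3)
    (htrace : IsTraceable G)
    (h2 : 2 ≤ Set.ncard {v : V | (G.neighborSet v).ncard = 2})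
    (hcut : ∀ v : V, ¬ (G.induce ({v}ᶜ : Set V)).Connected →
      ∀ C : (G.induce ({v}ᶜ : Set V)).ConnectedComponent,
        ∃ w : ({v}ᶜ : Set V),
          (G.induce ({v}ᶜ : Set V)).connectedComponentMk w = C ∧
          (G.neighborSet (w : V)).ncard = 2) :
    ∃ (u : V), (G.neighborSet u).ncard = 2 ∧
      ∃ (v : V) (p : G.Walk u v), p.IsPath ∧ ∀ x : V, x ∈ p.support := by
  obtain ⟨u, v, p, hp, hall⟩ := htrace
  have hf := HamSearch.IsHam.of_isPath hp hall
  by_contra hno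
  refine HamSearch.Counterexample.not_isHam ⟨?_, hdeg, h2, hcut, fun f hf h => ?_⟩ hf
  · rw [← hf.card_eq]
    exact hcard
  · exact hno ⟨f 0, h, hf.exists_isPath⟩
end

section
/- If G is a connected cubic simple graph of order n that has a cut vertex, then G has a spanning tree with at most n/6 + 1/3 leaves, i.e. ml(G) ≤ n/6 + 1/3. -/
open SimpleGraph

/-- Number of leaves (degree-one vertices) of a graph. -/
noncomputable def leafCount {V : Type} (T : SimpleGraph V) : ℕ :=
  Set.ncard {v | (T.neighborSet v).ncard = 1}

/-- The minimum leaf number: the minimum number of leaves of a spanning tree. -/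
noncomputable def ml {V : Type} (G : SimpleGraph V) : ℕ :=
  sInf {k | ∃ T : SimpleGraph V, T ≤ G ∧ T.IsTree ∧ leafCount T = k}

/-- A graph is cubic if every vertex has degree 3. -/
def IsCubic {V : Type} (G : SimpleGraph V) : Prop :=
  ∀ v : V, (G.neighborSet v).ncard = 3

theorem SimpleGraph.Connected.exists_adj_notMem {V : Type} {G : SimpleGraph V}
    (hconn : G.Connected) {A : Set V} {x y : V} (hx : x ∈ A) (hy : y ∉ A) :
    ∃ a ∈ A, ∃ b ∉ A, G.Adj a b := by
  obtain ⟨w⟩ := hconn.preconnected x y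
  obtain ⟨d, -, h1, h2⟩ := w.exists_boundary_dart A hx hy
  exact ⟨_, h1, _, h2, d.adj⟩

/-- Rooted trees with labelled vertices in which every vertex has at most two children. -/
inductive BTree (V : Type) : Type
  | leaf (v : V) : BTree V
  | one (v : V) (s : BTree V) : BTree V
  | two (v : V) (a b : BTree V) : BTree V

namespace BTree

variable {V : Type}

/-- The root of a tree. -/
def root : BTree V → V
  | leaf v => v
  | one v _ => v
  | two v _ _ => v

/-- The number of childless vertices. -/
def width : BTree V → ℕ
  | leaf _ => 1
  | one _ s => s.width
  | two _ a b => a.width + b.width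

/-- The number of vertices with exactly one child. -/
def unary : BTree V → ℕ
  | leaf _ => 0
  | one _ s => s.unary + 1
  | two _ a b => a.unary + b.unary

/-- The number of one-child vertices met from the root before any other vertex. -/
def stem : BTree V → ℕ
  | leaf _ => 0
  | one _ s => s.stem + 1
  | two _ _ _ => 0

/-- The underlying graph of a tree. -/
def graph : BTree V → SimpleGraph V
  | leaf _ => ⊥
  | one v s => s.graph ⊔ SimpleGraph.edge v s.root
  | two v a b =>
    (a.graph ⊔ SimpleGraph.edge v a.root) ⊔ (b.graph ⊔ SimpleGraph.edge v b.root)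

theorem width_pos (t : BTree V) : 0 < t.width := by
  induction t <;> simp only [width] <;> omega

theorem stem_le_unary (t : BTree V) : t.stem ≤ t.unary := by
  induction t <;> simp only [stem, unary] <;> omega

variable [DecidableEq V]

/-- The vertices of a tree. -/
def verts : BTree V → Finset V
  | leaf v => {v}
  | one v s => insert v s.verts
  | two v a b => insert v (a.verts ∪ b.verts)

/-- The childless vertices of a tree. -/
def leaves : BTree V → Finset V
  | leaf v => {v}
  | one _ s => s.leaves
  | two _ a b => a.leaves ∪ b.leaves

/-- The tree is a subgraph of `G` and its labels are distinct. -/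
def Valid (G : SimpleGraph V) : BTree V → Prop
  | leaf _ => True
  | one v s => G.Adj v s.root ∧ v ∉ s.verts ∧ s.Valid G
  | two v a b => G.Adj v a.root ∧ G.Adj v b.root ∧ v ∉ a.verts ∧ v ∉ b.verts ∧
      (∀ w ∈ a.verts, w ∉ b.verts) ∧ a.Valid G ∧ b.Valid G

variable {G : SimpleGraph V}

theorem root_mem_verts (t : BTree V) : t.root ∈ t.verts := by
  cases t <;> simp [root, verts]

theorem mem_verts_of_mem_leaves {t : BTree V} {v : V} (h : v ∈ t.leaves) : v ∈ t.verts := by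
  induction t with
  | leaf v => simpa [leaves, verts] using h
  | one v s ih => grind [leaves, verts]
  | two v a b iha ihb => grind [leaves, verts]

theorem Valid.card_leaves {t : BTree V} (h : t.Valid G) : t.leaves.card = t.width := by
  induction t with
  | leaf v => simp [leaves, width]
  | one v s ih => exact ih h.2.2
  | two v a b iha ihb =>
    obtain ⟨-, -, -, -, hd, ha, hb⟩ := h
    rw [leaves, Finset.card_union_of_disjoint, iha ha, ihb hb, width]
    rw [Finset.disjoint_left]
    exact fun x hx hx' => hd x (mem_verts_of_mem_leaves hx) (mem_verts_of_mem_leaves hx')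

theorem Valid.card_verts {t : BTree V} (h : t.Valid G) :
    t.verts.card + 1 = 2 * t.width + t.unary := by
  induction t with
  | leaf v => simp [verts, width, unary]
  | one v s ih =>
    have := ih h.2.2
    rw [verts, Finset.card_insert_of_notMem h.2.1]
    simp only [width, unary]
    omega
  | two v a b iha ihb =>
    obtain ⟨-, -, hva, hvb, hd, ha, hb⟩ := h
    have := iha ha
    have := ihb hb
    rw [verts, Finset.card_insert_of_notMem (by simp [hva, hvb]),
      Finset.card_union_of_disjoint (Finset.disjoint_left.2 hd)]
    simp only [width, unary]
    omega

theorem Valid.stem_lt_card {t : BTree V} (h : t.Valid G) : t.stem < t.verts.card := by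
  have := h.card_verts
  have := t.width_pos
  have := t.stem_le_unary
  omega

theorem Valid.eq_leaf_of_root_mem {t : BTree V} (h : t.Valid G) (hr : t.root ∈ t.leaves) :
    t = leaf t.root := by
  cases t with
  | leaf v => rfl
  | one v s => exact absurd (mem_verts_of_mem_leaves (t := s) hr) h.2.1
  | two v a b =>
    rcases Finset.mem_union.1 hr with h' | h'
    · exact absurd (mem_verts_of_mem_leaves h') h.2.2.1
    · exact absurd (mem_verts_of_mem_leaves h') h.2.2.2.1

/-! ### Surgery -/

/-- No vertex has four distinct neighbours. -/
def Subcubic (G : SimpleGraph V) : Prop :=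
  ∀ v a b c d, G.Adj v a → G.Adj v b → G.Adj v c → G.Adj v d →
    a = b ∨ a = c ∨ a = d ∨ b = c ∨ b = d ∨ c = d

/-- A tree can be hung below any vertex of another one that is adjacent to its root, provided the
root of the second tree has a neighbour outside of both. -/
theorem exists_attach (hG : Subcubic G) {S : BTree V} (hS : S.Valid G) {x : V}
    (hx : G.Adj x S.root) {t : BTree V} (ht : t.Valid G) (hd : ∀ w ∈ t.verts, w ∉ S.verts)
    (hxt : x ∈ t.verts) {p : V} (hp : p ∉ t.verts) (hpS : p ∉ S.verts) (hpt : G.Adj p t.root) :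
    ∃ t' : BTree V, t'.Valid G ∧ t'.root = t.root ∧
      (∀ w, w ∈ t'.verts ↔ w ∈ t.verts ∨ w ∈ S.verts) ∧ t'.width ≤ t.width + S.width := by
  have hSr := S.root_mem_verts
  induction t generalizing p with
  | leaf v =>
    refine ⟨one v S, ?_, rfl, ?_, ?_⟩
    · grind [Valid, verts]
    · grind [verts]
    · simp [width]
  | one v s ih =>
    by_cases hxv : x = v
    · refine ⟨two v s S, ?_, rfl, ?_, ?_⟩
      · grind [Valid, verts]
      · grind [verts]
      · simp [width]
    · obtain ⟨hv, hvs, hs⟩ := ht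
      obtain ⟨s', h1, h2, h3, h4⟩ := ih (p := v) hs (by grind [verts]) (by grind [verts]) hvs
        (by grind [verts]) hv
      exact ⟨one v s', by grind [Valid, verts], rfl, by grind [verts], by simpa [width] using h4⟩
  | two v a b iha ihb =>
    obtain ⟨hva, hvb, hna, hnb, hab, ha, hb⟩ := ht
    have har := a.root_mem_verts
    have hbr := b.root_mem_verts
    have hxv : x ≠ v := by
      rintro rfl
      have := hG x p a.root b.root S.root hpt.symm hva hvb hx
      grind [verts]
    have hx' : x ∈ a.verts ∨ x ∈ b.verts := by grind [verts]
    rcases hx' with hx' | hx'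
    · obtain ⟨s', h1, h2, h3, h4⟩ := iha (p := v) ha (by grind [verts]) hx' hna
        (by grind [verts]) hva
      exact ⟨two v s' b, by grind [Valid, verts], rfl, by grind [verts],
        by simp only [width]; omega⟩
    · obtain ⟨s', h1, h2, h3, h4⟩ := ihb (p := v) hb (by grind [verts]) hx' hnb
        (by grind [verts]) hvb
      exact ⟨two v a s', by grind [Valid, verts], rfl, by grind [verts],
        by simp only [width]; omega⟩

/-- Hanging a tree below a leaf of another one. -/
theorem exists_attach_leaf {S : BTree V} (hS : S.Valid G) {x : V}
    (hx : G.Adj x S.root) {t : BTree V} (ht : t.Valid G) (hd : ∀ w ∈ t.verts, w ∉ S.verts)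
    (hxt : x ∈ t.leaves) :
    ∃ t' : BTree V, t'.Valid G ∧ t'.root = t.root ∧
      (∀ w, w ∈ t'.verts ↔ w ∈ t.verts ∨ w ∈ S.verts) ∧ t'.width + 1 ≤ t.width + S.width := by
  induction t with
  | leaf v =>
    exact ⟨one v S, by grind [Valid, verts, leaves], rfl, by grind [verts],
      by simp only [width]; omega⟩
  | one v s ih =>
    obtain ⟨hv, hvs, hs⟩ := ht
    obtain ⟨s', h1, h2, h3, h4⟩ := ih hs (by grind [verts]) hxt
    exact ⟨one v s', by grind [Valid, verts], rfl, by grind [verts], by simpa [width] using h4⟩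
  | two v a b iha ihb =>
    obtain ⟨hva, hvb, hna, hnb, hab, ha, hb⟩ := ht
    rcases Finset.mem_union.1 hxt with hx' | hx'
    · obtain ⟨s', h1, h2, h3, h4⟩ := iha ha (by grind [verts]) hx'
      exact ⟨two v s' b, by grind [Valid, verts], rfl, by grind [verts],
        by simp only [width]; omega⟩
    · obtain ⟨s', h1, h2, h3, h4⟩ := ihb hb (by grind [verts]) hx'
      exact ⟨two v a s', by grind [Valid, verts], rfl, by grind [verts],
        by simp only [width]; omega⟩

/-- Joining the roots of two trees by an edge and moving the root to a leaf of one of them. -/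
theorem exists_reroot_join {t S : BTree V} {l : V} (ht : t.Valid G) (hl : l ∈ t.leaves)
    (hS : S.Valid G) (hd : ∀ w ∈ t.verts, w ∉ S.verts) (hadj : G.Adj t.root S.root) :
    ∃ t' s : BTree V, t' = one l s ∧ t'.Valid G ∧
      (∀ w, w ∈ t'.verts ↔ w ∈ t.verts ∨ w ∈ S.verts) ∧ t'.width + 1 ≤ t.width + S.width := by
  induction t generalizing S with
  | leaf v =>
    obtain rfl : l = v := by simpa [leaves] using hl
    exact ⟨one l S, S, rfl, by grind [Valid, verts, leaves, root], by grind [verts],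
      by simp only [width]; omega⟩
  | one v s ih =>
    obtain ⟨hv, hvs, hs⟩ := ht
    obtain ⟨t', s', h0, h1, h2, h3⟩ := ih (S := one v S) hs hl (by grind [Valid, verts, root])
      (by grind [verts]) hv.symm
    exact ⟨t', s', h0, h1, by grind [verts], by simpa [width] using h3⟩
  | two v a b iha ihb =>
    obtain ⟨hva, hvb, hna, hnb, hab, ha, hb⟩ := ht
    rcases Finset.mem_union.1 hl with hl' | hl'
    · obtain ⟨t', s', h0, h1, h2, h3⟩ := iha (S := two v b S) ha hl'
        (by simp only [verts, Finset.mem_insert, Finset.mem_union] at hd; grind [Valid, root])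
        (by grind [verts]) hva.symm
      exact ⟨t', s', h0, h1, by grind [verts], by simp only [width] at h3 ⊢; omega⟩
    · obtain ⟨t', s', h0, h1, h2, h3⟩ := ihb (S := two v a S) hb hl'
        (by simp only [verts, Finset.mem_insert, Finset.mem_union] at hd; grind [Valid, root])
        (by grind [verts]) hvb.symm
      exact ⟨t', s', h0, h1, by grind [verts], by simp only [width] at h3 ⊢; omega⟩

/-- Moving the root to a leaf does not increase the width, and decreases it if the old root had
two children. -/
theorem exists_reroot {t : BTree V} {l : V} (ht : t.Valid G) (hl : l ∈ t.leaves) :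
    ∃ t' : BTree V, t'.Valid G ∧ t'.root = l ∧ (∀ w, w ∈ t'.verts ↔ w ∈ t.verts) ∧
      t'.width ≤ t.width ∧ ((∃ v a b, t = two v a b) → t'.width < t.width) := by
  cases t with
  | leaf v =>
    obtain rfl : l = v := by simpa [leaves] using hl
    exact ⟨leaf l, ht, rfl, by simp, le_rfl, by simp⟩
  | one v s =>
    obtain ⟨hv, hvs, hs⟩ := ht
    obtain ⟨t', s', rfl, h1, h2, h3⟩ := exists_reroot_join (S := leaf v) hs hl
      (by simp [Valid]) (by grind [verts]) hv.symm
    exact ⟨_, h1, rfl, by grind [verts], by simp only [width] at h3 ⊢; omega, by simp⟩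
  | two v a b =>
    obtain ⟨hva, hvb, hna, hnb, hab, ha, hb⟩ := ht
    rcases Finset.mem_union.1 hl with hl' | hl'
    · obtain ⟨t', s', rfl, h1, h2, h3⟩ := exists_reroot_join (S := one v b) ha hl'
        (by grind [Valid]) (by grind [verts]) hva.symm
      simp only [width] at h3
      exact ⟨_, h1, rfl, by grind [verts], by simp only [width]; omega,
        fun _ => by simp only [width]; omega⟩
    · obtain ⟨t', s', rfl, h1, h2, h3⟩ := exists_reroot_join (S := one v a) hb hl'
        (by grind [Valid]) (by grind [verts]) hvb.symm
      simp only [width] at h3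
      exact ⟨_, h1, rfl, by grind [verts], by simp only [width]; omega,
        fun _ => by simp only [width]; omega⟩

/-- Two sibling subtrees `a`, `b` and a further tree `S`, all adjacent to `v`, with an edge between
leaves of `b` and `S`, can be combined into a tree rooted at a leaf of `a`. -/
theorem exists_reroot_join_siblings {a b S : BTree V} {v l l' y : V} (ht : (two v a b).Valid G)
    (hl : l ∈ a.leaves) (hl' : l' ∈ b.leaves) (hS : S.Valid G)
    (hd : ∀ w ∈ (two v a b).verts, w ∉ S.verts) (hadj : G.Adj v S.root) (hy : y ∈ S.leaves)
    (hyl : G.Adj y l') :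
    ∃ t' : BTree V, t'.Valid G ∧ t'.root = l ∧
      (∀ w, w ∈ t'.verts ↔ w ∈ (two v a b).verts ∨ w ∈ S.verts) ∧
      t'.width + 2 ≤ (two v a b).width + S.width := by
  obtain ⟨hva, hvb, hna, hnb, hab, ha, hb⟩ := ht
  obtain ⟨b', hb1, hb2, hb3, hb4, -⟩ := exists_reroot hb hl'
  obtain ⟨S', hS1, hS2, hS3, hS4⟩ := exists_attach_leaf hb1 (hb2 ▸ hyl) hS
    (by grind [verts]) hy
  obtain ⟨t', s', rfl, h1, h2, h3⟩ := exists_reroot_join (S := one v S') ha hl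
    (by grind [Valid, verts]) (by grind [verts]) hva.symm
  exact ⟨_, h1, rfl, by grind [verts], by simp only [width] at h3 ⊢; omega⟩

theorem Valid.swap {a b : BTree V} {v : V} (h : (two v a b).Valid G) : (two v b a).Valid G :=
  ⟨h.2.1, h.1, h.2.2.2.1, h.2.2.1, fun w hb ha => h.2.2.2.2.1 w ha hb, h.2.2.2.2.2.2,
    h.2.2.2.2.2.1⟩

/-- Joining the roots of two trees and a leaf of the first to a leaf of the second allows to break
the resulting cycle at a branch vertex, while moving the root to another leaf of the first tree. -/
theorem exists_reroot_join_leaves {t S : BTree V} {l l' y : V} (ht : t.Valid G)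
    (hl : l ∈ t.leaves) (hl' : l' ∈ t.leaves) (hne : l ≠ l') (hS : S.Valid G)
    (hd : ∀ w ∈ t.verts, w ∉ S.verts) (hadj : G.Adj t.root S.root) (hy : y ∈ S.leaves)
    (hyl : G.Adj y l') :
    ∃ t' : BTree V, t'.Valid G ∧ t'.root = l ∧
      (∀ w, w ∈ t'.verts ↔ w ∈ t.verts ∨ w ∈ S.verts) ∧ t'.width + 2 ≤ t.width + S.width := by
  induction t generalizing S with
  | leaf v => grind [leaves]
  | one v s ih =>
    obtain ⟨hv, hvs, hs⟩ := ht
    obtain ⟨t', h0, h1, h2, h3⟩ := ih (S := one v S) hs hl hl'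
      (by clear ih; grind [Valid, verts, root]) (by grind [verts]) hv.symm hy
    exact ⟨t', h0, h1, by grind [verts], by simpa [width] using h3⟩
  | two v a b iha ihb =>
    have ht' := ht
    obtain ⟨hva, hvb, hna, hnb, hab, ha, hb⟩ := ht
    rcases Finset.mem_union.1 hl with hla | hlb <;> rcases Finset.mem_union.1 hl' with hla' | hlb'
    · obtain ⟨t', h0, h1, h2, h3⟩ := iha (S := two v b S) ha hla hla'
        (by simp only [verts, Finset.mem_insert, Finset.mem_union] at hd; grind [Valid, root])
        (by grind [verts]) hva.symm
        (Finset.mem_union_right _ hy)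
      exact ⟨t', h0, h1, by grind [verts], by simp only [width] at h3 ⊢; omega⟩
    · exact exists_reroot_join_siblings ht' hla hlb' hS hd hadj hy hyl
    · obtain ⟨t', h0, h1, h2, h3⟩ := exists_reroot_join_siblings ht'.swap hlb hla' hS
        (by grind [verts]) hadj hy hyl
      exact ⟨t', h0, h1, by grind [verts], by simp only [width] at h3 ⊢; omega⟩
    · obtain ⟨t', h0, h1, h2, h3⟩ := ihb (S := two v a S) hb hlb hlb'
        (by simp only [verts, Finset.mem_insert, Finset.mem_union] at hd; grind [Valid, root])
        (by grind [verts]) hvb.symm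
        (Finset.mem_union_right _ hy)
      exact ⟨t', h0, h1, by grind [verts], by simp only [width] at h3 ⊢; omega⟩

/-- Deleting a leaf. The stem does not become shorter unless the tree is a path. -/
theorem exists_delete_leaf {t : BTree V} {l : V} (ht : t.Valid G) (hl : l ∈ t.leaves)
    (hlt : l ≠ t.root) :
    ∃ t' : BTree V, t'.Valid G ∧ t'.root = t.root ∧ (∀ w, w ∈ t'.verts ↔ w ∈ t.verts ∧ w ≠ l) ∧
      t'.width ≤ t.width ∧ (2 ≤ t.width → t.stem ≤ t'.stem) := by
  induction t with
  | leaf v => simp [leaves, root] at hl hlt; contradiction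
  | one v s ih =>
    obtain ⟨hv, hvs, hs⟩ := ht
    by_cases hls : l = s.root
    · subst hls
      have := hs.eq_leaf_of_root_mem hl
      rw [this] at hvs ⊢
      exact ⟨leaf v, by simp [Valid], rfl, by grind [verts], le_rfl, by simp [width]⟩
    · obtain ⟨s', h1, h2, h3, h4, h5⟩ := ih hs hl hls
      exact ⟨one v s', by grind [Valid, verts], rfl, by grind [verts, root],
        by simpa [width] using h4, by simpa [width, stem] using h5⟩
  | two v a b iha ihb =>
    obtain ⟨hva, hvb, hna, hnb, hab, ha, hb⟩ := ht
    rcases Finset.mem_union.1 hl with hl' | hl'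
    · have hl2 := mem_verts_of_mem_leaves hl'
      by_cases hla : l = a.root
      · subst hla
        have := ha.eq_leaf_of_root_mem hl'
        have hav : ∀ w, w ∈ a.verts ↔ w = a.root := by rw [this]; simp [verts, root]
        exact ⟨one v b, by grind [Valid, verts], rfl, by grind [verts, root],
          by simp [width], by simp [stem]⟩
      · obtain ⟨s', h1, h2, h3, h4, h5⟩ := iha ha hl' hla
        exact ⟨two v s' b, by grind [Valid, verts], rfl, by grind [verts, root],
          by simp only [width]; omega, by simp [stem]⟩
    · have hl2 := mem_verts_of_mem_leaves hl'
      by_cases hlb : l = b.root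
      · subst hlb
        have := hb.eq_leaf_of_root_mem hl'
        have hav : ∀ w, w ∈ b.verts ↔ w = b.root := by rw [this]; simp [verts, root]
        exact ⟨one v a, by grind [Valid, verts], rfl, by grind [verts, root],
          by simp [width], by simp [stem]⟩
      · obtain ⟨s', h1, h2, h3, h4, h5⟩ := ihb hb hl' hlb
        exact ⟨two v a s', by grind [Valid, verts], rfl, by grind [verts, root],
          by simp only [width]; omega, by simp [stem]⟩

/-! ### Optimal trees -/

/-- Among the trees of `G` with the same vertices and the same root, `t` has minimum width and, as
a second priority, the longest stem. -/
def Best (G : SimpleGraph V) (t : BTree V) : Prop :=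
  ∀ t' : BTree V, t'.Valid G → t'.verts = t.verts → t'.root = t.root →
    t.width ≤ t'.width ∧ (t'.width = t.width → t'.stem ≤ t.stem)

/-- A path on four vertices whose last vertex is adjacent to all others. -/
def IsKite (G : SimpleGraph V) (t : BTree V) : Prop :=
  ∃ x y z l, t = one x (one y (one z (leaf l))) ∧ G.Adj x l ∧ G.Adj y l

/-- Every subtree is `Best`, and no subtree is a kite. -/
def Opt (G : SimpleGraph V) : BTree V → Prop
  | leaf v => Best G (leaf v)
  | one v s => s.Opt G ∧ Best G (one v s) ∧ ¬ IsKite G (one v s)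
  | two v a b => a.Opt G ∧ b.Opt G ∧ Best G (two v a b)

theorem Opt.best {t : BTree V} (h : t.Opt G) : Best G t := by
  cases t with
  | leaf v => exact h
  | one v s => exact h.2.1
  | two v a b => exact h.2.2

theorem best_of_path {t : BTree V} (hw : t.width = 1) (hs : t.stem + 1 = t.verts.card) :
    Best G t := by
  intro t' h1 h2 h3
  have := t'.width_pos
  have := h1.stem_lt_card
  rw [h2] at this
  omega

theorem Best.of_le {t t' : BTree V} (h : Best G t) (hv : t'.verts = t.verts)
    (hr : t'.root = t.root) (hw : t'.width ≤ t.width) (hs : t.stem ≤ t'.stem) : Best G t' := by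
  intro u h1 h2 h3
  have := h u h1 (h2.trans hv) (h3.trans hr)
  have h4 := this.1
  refine ⟨by omega, fun h5 => ?_⟩
  have := this.2 (by omega)
  omega

theorem exists_best {t : BTree V} (ht : t.Valid G) :
    ∃ t' : BTree V, t'.Valid G ∧ t'.verts = t.verts ∧ t'.root = t.root ∧ Best G t' := by
  classical
  have hex : ∃ n, ∃ t' : BTree V, t'.Valid G ∧ t'.verts = t.verts ∧ t'.root = t.root ∧
      t'.width * (t.verts.card + 1) + (t.verts.card - t'.stem) = n := ⟨_, t, ht, rfl, rfl, rfl⟩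
  obtain ⟨t', h1, h2, h3, h4⟩ := Nat.find_spec hex
  refine ⟨t', h1, h2, h3, fun u hu1 hu2 hu3 => ?_⟩
  have hmin := Nat.find_min' hex ⟨u, hu1, hu2.trans h2, hu3.trans h3, rfl⟩
  rw [← h4] at hmin
  have hs := h1.stem_lt_card
  have hs' := hu1.stem_lt_card
  rw [hu2] at hs'
  rw [h2] at hs hs'
  refine ⟨?_, fun hw => ?_⟩
  · by_contra! hlt
    have : (u.width + 1) * (t.verts.card + 1) ≤ t'.width * (t.verts.card + 1) :=
      Nat.mul_le_mul_right _ hlt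
    rw [add_mul] at this
    omega
  · rw [hw] at hmin
    omega

theorem Opt.of_kite (hG : Subcubic G) {x y z l p : V}
    (hv : (one x (one y (one z (leaf l)))).Valid G) (hxl : G.Adj x l) (hyl : G.Adj y l)
    (hp : p ∉ (one x (one y (one z (leaf l)))).verts) (hpx : G.Adj p x) :
    (one x (one l (one y (leaf z)))).Valid G ∧ (one x (one l (one y (leaf z)))).Opt G ∧
      (one x (one l (one y (leaf z)))).verts = (one x (one y (one z (leaf l)))).verts := by
  simp only [Valid, root, verts, Finset.mem_insert, Finset.mem_singleton, not_or] at hv hp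
  have hlast : Best G (leaf z) := best_of_path rfl (by simp [stem, verts])
  have htail : Best G (one y (leaf z)) := best_of_path rfl (by
    rw [verts, verts, Finset.card_pair hv.2.2.2.1.1]; rfl)
  have hmid : Best G (one l (one y (leaf z))) := best_of_path rfl (by
    rw [verts, verts, verts, Finset.card_eq_three.2 ⟨l, y, z, by grind, by grind, by grind, rfl⟩]
    rfl)
  have hverts : (one x (one l (one y (leaf z)))).verts =
      (one x (one y (one z (leaf l)))).verts := by
    ext w; simp only [verts, Finset.mem_insert, Finset.mem_singleton]; tauto
  refine ⟨?_, ⟨⟨⟨hlast, htail, ?_⟩, hmid, ?_⟩, ?_, ?_⟩, hverts⟩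
  · simp only [Valid, root, verts, Finset.mem_insert, Finset.mem_singleton, not_or]
    refine ⟨hxl, by tauto, hyl.symm, by grind, by tauto, by tauto, trivial⟩
  · simp [IsKite]
  · simp [IsKite]
  · refine best_of_path rfl ?_
    rw [hverts, verts, verts, verts, verts, Finset.card_insert_of_notMem (by simp; tauto),
      Finset.card_insert_of_notMem (by simp; tauto), Finset.card_pair (by tauto)]
    rfl
  · rintro ⟨x', l', y', z', h, h1, h2⟩
    simp only [one.injEq, leaf.injEq] at h
    obtain ⟨rfl, rfl, rfl, rfl⟩ := h
    have := hG x p l y z hpx.symm hxl hv.1 h1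
    grind

theorem exists_opt (hG : Subcubic G) {t : BTree V} (ht : t.Valid G) {p : V} (hp : p ∉ t.verts)
    (hpt : G.Adj p t.root) :
    ∃ t' : BTree V, t'.Valid G ∧ t'.verts = t.verts ∧ t'.root = t.root ∧ t'.Opt G := by
  induction hn : t.verts.card using Nat.strong_induction_on generalizing t p with
  | _ n ih =>
  subst hn
  obtain ⟨u, hu, huv, hur, hub⟩ := exists_best ht
  rw [← huv] at hp ih ⊢
  rw [← hur] at hpt ⊢
  clear huv hur ht
  cases u with
  | leaf v => exact ⟨leaf v, hu, rfl, rfl, hub⟩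
  | one v s =>
    obtain ⟨hvs, hns, hs⟩ := hu
    obtain ⟨s', h1, h2, h3, h4⟩ := ih _ (by
      rw [verts, Finset.card_insert_of_notMem hns]; omega) hs hns hvs rfl
    have hval : (one v s').Valid G := by simp only [Valid, h2, h3]; exact ⟨hvs, hns, h1⟩
    have hverts : (one v s').verts = (one v s).verts := by simp only [verts, h2]
    have hsb := h4.best s hs h2.symm h3.symm
    have hb' := (hub _ hval hverts rfl).1
    simp only [width] at hb'
    have hbest : Best G (one v s') := by
      refine hub.of_le hverts rfl hsb.1 ?_
      have := hsb.2 (by omega)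
      simpa [stem] using this
    by_cases hk : IsKite G (one v s')
    · obtain ⟨x, y, z, l, heq, hxl, hyl⟩ := hk
      rw [heq] at hval hverts
      have hxv : v = x := by
        have := congrArg root heq
        simpa [root] using this
      subst hxv
      obtain ⟨k1, k2, k3⟩ := Opt.of_kite hG hval hxl hyl (by rwa [hverts]) hpt
      exact ⟨_, k1, k3.trans hverts, rfl, k2⟩
    · exact ⟨one v s', hval, hverts, rfl, h4, hbest, hk⟩
  | two v a b =>
    obtain ⟨hva, hvb, hna, hnb, hab, ha, hb⟩ := hu
    have hcard : (two v a b).verts.card = a.verts.card + b.verts.card + 1 := by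
      rw [verts, Finset.card_insert_of_notMem (by simp [hna, hnb]),
        Finset.card_union_of_disjoint (Finset.disjoint_left.2 hab)]
    obtain ⟨a', h1, h2, h3, h4⟩ := ih _ (by omega) ha hna hva rfl
    obtain ⟨b', k1, k2, k3, k4⟩ := ih _ (by omega) hb hnb hvb rfl
    have hverts : (two v a' b').verts = (two v a b).verts := by simp only [verts, h2, k2]
    refine ⟨two v a' b', ?_, hverts, rfl, h4, k4, hub.of_le hverts rfl ?_ le_rfl⟩
    · simp only [Valid, h2, h3, k2, k3]
      exact ⟨hva, hvb, hna, hnb, hab, h1, k1⟩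
    · have := (h4.best a ha h2.symm h3.symm).1
      have := (k4.best b hb k2.symm k3.symm).1
      simp only [width]
      omega

/-! ### Structure of optimal trees -/

/-- Leaves of different branches of an optimal tree have no neighbours in the other branch. -/
theorem Opt.not_adj_of_siblings (hG : Subcubic G) {v l x : V} {a b : BTree V}
    (h : Best G (two v a b)) (hv : (two v a b).Valid G) (hl : l ∈ a.leaves) (hx : x ∈ b.verts) :
    ¬ G.Adj x l := by
  intro hxl
  obtain ⟨hva, hvb, hna, hnb, hab, ha, hb⟩ := hv
  obtain ⟨a', h1, h2, h3, h4, -⟩ := exists_reroot ha hl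
  obtain ⟨b', k1, k2, k3, k4⟩ := exists_attach hG h1 (h2 ▸ hxl) hb (by grind) hx hnb
    (by grind) hvb
  have := h (one v b') (by grind [Valid]) (by ext; grind [verts]) rfl
  simp only [width, stem] at this
  omega

/-- If the root has a single child which has two children, no leaf is joined to the root. -/
theorem Best.not_adj_of_two {x y l : V} {a b : BTree V}
    (h : Best G (one x (two y a b))) (hv : (one x (two y a b)).Valid G)
    (hl : l ∈ (two y a b).leaves) : ¬ G.Adj x l := by
  intro hxl
  obtain ⟨hxy, hx, ht⟩ := hv
  obtain ⟨t', h1, h2, h3, -, h4⟩ := exists_reroot ht hl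
  have h5 := h4 ⟨_, _, _, rfl⟩
  have := h (one x t') (by grind [Valid]) (by rw [verts, verts]; ext; grind) rfl
  simp only [width] at this h5
  omega

/-- Two consecutive one-child vertices are not joined to different leaves. -/
theorem Best.eq_of_adj_of_adj {x y l l' : V} {s : BTree V} (h : Best G (one x (one y s)))
    (hv : (one x (one y s)).Valid G) (hl : l ∈ s.leaves) (hl' : l' ∈ s.leaves)
    (hxl : G.Adj x l) (hyl : G.Adj y l') : l = l' := by
  by_contra hne
  obtain ⟨hxy, hx, hys, hy, hs⟩ := hv
  obtain ⟨t', h1, h2, h3, h4⟩ := exists_reroot_join_leaves (S := leaf y) hs hl hl' hne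
    (by simp [Valid]) (by grind [verts]) hys.symm (by simp [leaves]) hyl
  have := h (one x t') (by grind [Valid, verts]) (by ext; grind [verts]) rfl
  simp only [width] at this h4
  omega

/-- If two consecutive one-child vertices are joined to the same leaf, then the tree is a path. -/
theorem Best.width_eq_one {x y l : V} {s : BTree V} (h : Best G (one x (one y s)))
    (hv : (one x (one y s)).Valid G) (hl : l ∈ s.leaves) (hls : l ≠ s.root)
    (hxl : G.Adj x l) (hyl : G.Adj y l) : s.width = 1 := by
  by_contra hne
  have hpos := s.width_pos
  obtain ⟨hxy, hx, hys, hy, hs⟩ := hv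
  have hl' := mem_verts_of_mem_leaves hl
  obtain ⟨t', h1, h2, h3, h4, h5⟩ := exists_delete_leaf hs hl hls
  have := h (one x (one l (one y t'))) (by grind [Valid, verts, root, G.adj_comm])
    (by ext; grind [verts]) rfl
  simp only [width, stem] at this
  omega

/-! ### Counting -/

open Classical in
/-- The number of pairs consisting of a one-child vertex and a leaf below it that are adjacent in
`G` but not in the tree. -/
noncomputable def backEdges (G : SimpleGraph V) : BTree V → ℕ
  | leaf _ => 0
  | one v s => s.backEdges G + (s.leaves.filter fun l => G.Adj v l ∧ l ≠ s.root).card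
  | two _ a b => a.backEdges G + b.backEdges G

open Classical in
/-- A one-child vertex with an outer neighbour has at most one back edge. -/
theorem card_filter_adj_le_one (hG : Subcubic G) {v p : V} {s : BTree V}
    (hv : (one v s).Valid G) (hp : p ∉ (one v s).verts) (hpv : G.Adj p v) :
    (s.leaves.filter fun l => G.Adj v l ∧ l ≠ s.root).card ≤ 1 := by
  rw [Finset.card_le_one]
  intro x hx y hy
  simp only [Finset.mem_filter] at hx hy
  have h1 := mem_verts_of_mem_leaves hx.1
  have h2 := mem_verts_of_mem_leaves hy.1
  have h3 := s.root_mem_verts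
  have := hG v p s.root x y hpv.symm hv.1 hx.2.1 hy.2.1
  simp only [verts, Finset.mem_insert, not_or] at hp
  grind

open Classical in
/-- In an optimal tree every edge from a leaf to another vertex of the tree is a tree edge or a
back edge. -/
theorem sum_card_adj_le (hG : Subcubic G) {t : BTree V} (ht : t.Valid G) (ho : t.Opt G) {p : V}
    (hp : p ∉ t.verts) (hpt : G.Adj p t.root) :
    ∑ l ∈ t.leaves, (t.verts.filter fun x => G.Adj l x).card + (if t = leaf t.root then 1 else 0)
      ≤ t.backEdges G + t.width := by
  induction t generalizing p with
  | leaf v => simp [leaves, verts, backEdges, width, root, Finset.filter_singleton]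
  | one v s ih =>
    obtain ⟨hvs, hns, hs⟩ := ht
    have ih := ih hs ho.1 hns hvs
    have key : ∀ l ∈ s.leaves, ((one v s).verts.filter fun x => G.Adj l x).card ≤
        (s.verts.filter fun x => G.Adj l x).card + ((if G.Adj v l ∧ l ≠ s.root then 1 else 0) +
          (if l = s.root then 1 else 0)) := by
      intro l hl
      rw [verts, Finset.filter_insert]
      split_ifs <;> grind [Finset.card_insert_le, G.adj_comm]
    have hsum := Finset.sum_le_sum key
    rw [Finset.sum_add_distrib, Finset.sum_add_distrib, ← Finset.card_filter,
      Finset.sum_ite_eq'] at hsum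
    have hroot : (if s.root ∈ s.leaves then 1 else 0) ≤ (if s = leaf s.root then 1 else 0) := by
      split_ifs with h1 h2 <;> try omega
      exact absurd (hs.eq_leaf_of_root_mem h1) h2
    simp only [leaves, backEdges, width, reduceCtorEq, if_false]
    omega
  | two v a b iha ihb =>
    have hv := ht
    obtain ⟨hva, hvb, hna, hnb, hab, ha, hb⟩ := ht
    have iha := iha ha ho.1 hna hva
    have ihb := ihb hb ho.2.1 hnb hvb
    have har := a.root_mem_verts
    have hbr := b.root_mem_verts
    have hdeg : ∀ l ∈ (two v a b).verts, G.Adj v l → l = a.root ∨ l = b.root := by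
      intro l hl hvl
      have := hG v p a.root b.root l hpt.symm hva hvb hvl
      grind [verts]
    have keya : ∀ l ∈ a.leaves, ((two v a b).verts.filter fun x => G.Adj l x).card ≤
        (a.verts.filter fun x => G.Adj l x).card + (if l = a.root then 1 else 0) := by
      intro l hl
      have hl' := mem_verts_of_mem_leaves hl
      have hsub : ((two v a b).verts.filter fun x => G.Adj l x) ⊆
          (a.verts.filter fun x => G.Adj l x) ∪ (if l = a.root then {v} else ∅) := by
        intro x hx
        have := fun hx => Opt.not_adj_of_siblings hG (x := x) ho.2.2 hv hl hx
        have := hdeg l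
        grind [verts, G.adj_comm]
      refine (Finset.card_le_card hsub).trans ((Finset.card_union_le _ _).trans ?_)
      split_ifs <;> simp
    have keyb : ∀ l ∈ b.leaves, ((two v a b).verts.filter fun x => G.Adj l x).card ≤
        (b.verts.filter fun x => G.Adj l x).card + (if l = b.root then 1 else 0) := by
      intro l hl
      have hl' := mem_verts_of_mem_leaves hl
      have hsub : ((two v a b).verts.filter fun x => G.Adj l x) ⊆
          (b.verts.filter fun x => G.Adj l x) ∪ (if l = b.root then {v} else ∅) := by
        intro x hx
        have hbest : Best G (two v b a) := ho.2.2.of_le (by simp [verts, Finset.union_comm]) rfl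
          (by simp [width, add_comm]) le_rfl
        have := fun hx => Opt.not_adj_of_siblings hG (x := x) hbest hv.swap hl hx
        have := hdeg l
        grind [verts, G.adj_comm]
      refine (Finset.card_le_card hsub).trans ((Finset.card_union_le _ _).trans ?_)
      split_ifs <;> simp
    have hsuma := Finset.sum_le_sum keya
    have hsumb := Finset.sum_le_sum keyb
    rw [Finset.sum_add_distrib, Finset.sum_ite_eq'] at hsuma hsumb
    have hroota : (if a.root ∈ a.leaves then 1 else 0) ≤ (if a = leaf a.root then 1 else 0) := by
      split_ifs with h1 h2 <;> try omega
      exact absurd (ha.eq_leaf_of_root_mem h1) h2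
    have hrootb : (if b.root ∈ b.leaves then 1 else 0) ≤ (if b = leaf b.root then 1 else 0) := by
      split_ifs with h1 h2 <;> try omega
      exact absurd (hb.eq_leaf_of_root_mem h1) h2
    simp only [leaves, backEdges, width, reduceCtorEq, if_false]
    rw [Finset.sum_union (Finset.disjoint_left.2 fun x hx hx' =>
      hab x (mem_verts_of_mem_leaves hx) (mem_verts_of_mem_leaves hx'))]
    omega

theorem Subcubic.card_le (hG : Subcubic G) {v : V} {S : Finset V} (hS : ∀ x ∈ S, G.Adj v x) :
    S.card ≤ 3 := by
  by_contra! h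
  obtain ⟨a, ha⟩ := Finset.card_pos.1 (by omega : 0 < S.card)
  obtain ⟨b, hb, c, hc, d, hd, h1, h2, h3⟩ := Finset.two_lt_card.1
    (by rw [Finset.card_erase_of_mem ha]; omega : 2 < (S.erase a).card)
  have := hG v a b c d (hS a ha) (hS b (Finset.mem_of_mem_erase hb))
    (hS c (Finset.mem_of_mem_erase hc)) (hS d (Finset.mem_of_mem_erase hd))
  grind

open Classical in
theorem Valid.backEdges_lt_of_width_eq_one {t : BTree V} (ht : t.Valid G) (hw : t.width = 1)
    {l : V} (hl : l ∈ t.leaves) :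
    t.backEdges G + 1 ≤
      (t.verts.filter fun x => G.Adj l x).card + (if t = leaf t.root then 1 else 0) := by
  induction t with
  | leaf v => simp [backEdges, root]
  | two v a b =>
    have := a.width_pos
    have := b.width_pos
    simp only [width] at hw
    omega
  | one v s ih =>
    obtain ⟨hvs, hns, hs⟩ := ht
    replace hl : l ∈ s.leaves := hl
    have ih := ih hs hw hl
    have hcard : s.leaves.card = 1 := hs.card_leaves.trans hw
    have hsl : s.leaves = {l} := by
      obtain ⟨l', hl'⟩ := Finset.card_eq_one.1 hcard
      rw [hl', Finset.mem_singleton] at hl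
      rw [hl', hl]
    have hroot : s = leaf s.root → l = s.root := by
      intro h
      rw [h] at hl
      simpa [leaves] using hl
    simp only [backEdges, verts, reduceCtorEq, if_false, hsl, Finset.filter_insert,
      Finset.filter_singleton]
    by_cases hadj : G.Adj v l
    · rw [if_pos hadj.symm, Finset.card_insert_of_notMem (by simp [hns])]
      by_cases hlr : l = s.root
      · rw [if_neg (by tauto)]
        split_ifs at ih <;> simp <;> omega
      · rw [if_neg (by tauto)] at ih
        rw [if_pos ⟨hadj, hlr⟩]
        simp
        omega
    · have hlr : l ≠ s.root := by rintro rfl; exact hadj hvs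
      rw [if_neg (by tauto)] at ih
      rw [if_neg (by tauto), if_neg (fun h => hadj h.symm)]
      simpa using ih

theorem backEdges_le_two_of_width_eq_one (hG : Subcubic G) {t : BTree V} (ht : t.Valid G)
    (hw : t.width = 1) : t.backEdges G ≤ 2 := by
  classical
  obtain ⟨l, hl⟩ := Finset.card_pos.1 (by rw [ht.card_leaves, hw]; omega : 0 < t.leaves.card)
  have h := ht.backEdges_lt_of_width_eq_one hw hl
  have hdeg := hG.card_le (S := t.verts.filter fun x => G.Adj l x) (v := l) (by simp)
  by_cases hr : t = leaf t.root
  · rw [hr]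
    simp [backEdges]
  · rw [if_neg hr] at h
    omega

/-- The upper ends of the back edges and their children are pairwise distinct one-child
vertices. -/
theorem two_mul_backEdges_le_unary (hG : Subcubic G) {t : BTree V} (ht : t.Valid G)
    (ho : t.Opt G) {p : V} (hp : p ∉ t.verts) (hpt : G.Adj p t.root) :
    2 * t.backEdges G ≤ t.unary := by
  classical
  suffices h : 2 * t.backEdges G ≤ t.unary ∧
      ∀ y s, t = one y s → 2 * s.backEdges G ≤ s.unary from h.1
  induction t generalizing p with
  | leaf v => simp [backEdges]
  | two v a b iha ihb =>
    have h1 := (iha ht.2.2.2.2.2.1 ho.1 ht.2.2.1 ht.1).1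
    have h2 := (ihb ht.2.2.2.2.2.2 ho.2.1 ht.2.2.2.1 ht.2.1).1
    refine ⟨?_, by simp⟩
    simp only [backEdges, unary]
    omega
  | one x s ih =>
    obtain ⟨hs1, hs2⟩ := ih ht.2.2 ho.1 ht.2.1 ht.1
    refine ⟨?_, fun y s' h => by cases h; exact hs1⟩
    have hone := card_filter_adj_le_one hG ht hp hpt
    by_cases hzero : (s.leaves.filter fun l => G.Adj x l ∧ l ≠ s.root) = ∅
    · simp only [backEdges, unary, hzero, Finset.card_empty]
      omega
    obtain ⟨l, hl⟩ := Finset.nonempty_iff_ne_empty.2 hzero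
    simp only [Finset.mem_filter] at hl
    cases s with
    | leaf y => simp [leaves, root] at hl; tauto
    | two y a b => exact absurd hl.2.1 (ho.2.1.not_adj_of_two ht hl.1)
    | one y r =>
      have hr := hs2 y r rfl
      by_cases hzero' : (r.leaves.filter fun l => G.Adj y l ∧ l ≠ r.root) = ∅
      · simp only [backEdges, unary, hzero', Finset.card_empty] at hone ⊢
        omega
      obtain ⟨l', hl'⟩ := Finset.nonempty_iff_ne_empty.2 hzero'
      simp only [Finset.mem_filter] at hl'
      obtain rfl := ho.2.1.eq_of_adj_of_adj ht hl.1 hl'.1 hl.2.1 hl'.2.1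
      have hw := ho.2.1.width_eq_one ht hl'.1 hl'.2.2 hl.2.1 hl'.2.1
      have hle : (one x (one y r)).backEdges G ≤ 2 :=
        backEdges_le_two_of_width_eq_one hG ht hw
      cases r with
      | leaf z => simp [leaves, root] at hl'; tauto
      | two z a b =>
        have := a.width_pos
        have := b.width_pos
        simp only [width] at hw
        omega
      | one z q =>
        cases q with
        | leaf w =>
          obtain rfl : l = w := by simpa [leaves] using hl'.1
          exact absurd ⟨x, y, z, l, rfl, hl.2.1, hl'.2.1⟩ ho.2.2
        | two w a b =>
          have := a.width_pos
          have := b.width_pos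
          simp only [width] at hw
          omega
        | one w q =>
          simp only [unary]
          omega

/-- If only the root of an optimal tree has an outer neighbour, then all back edges of the leaves
are present, which bounds the width. -/
theorem six_mul_width_le (hG : Subcubic G) {t : BTree V} (ht : t.Valid G)
    (ho : t.Opt G) {p : V} (hp : p ∉ t.verts) (hpt : G.Adj p t.root)
    (hcub : ∀ v, ∃ S : Finset V, S.card = 3 ∧ ∀ x, x ∈ S ↔ G.Adj v x)
    (hout : ∀ x ∈ t.verts, ∀ y ∉ t.verts, G.Adj x y → x = t.root ∧ y = p) :
    6 * t.width ≤ t.verts.card + 1 := by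
  classical
  have h1 := sum_card_adj_le hG ht ho hp hpt
  have h2 := two_mul_backEdges_le_unary hG ht ho hp hpt
  have h3 := ht.card_verts
  have hne : t ≠ leaf t.root := by
    intro h
    have hv : t.verts = {t.root} := by rw [h]; simp [verts, root]
    obtain ⟨S, hS, hSadj⟩ := hcub t.root
    have hsub : S ⊆ {p} := by
      intro x hx
      have hadj := (hSadj x).1 hx
      have hx' : x ∉ t.verts := by
        rw [hv, Finset.mem_singleton]
        exact hadj.ne'
      simpa using (hout _ t.root_mem_verts x hx' hadj).2
    have := Finset.card_le_card hsub
    simp only [Finset.card_singleton] at this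
    omega
  have hdeg : ∀ l ∈ t.leaves, 3 ≤ (t.verts.filter fun x => G.Adj l x).card := by
    intro l hl
    obtain ⟨S, hS, hSadj⟩ := hcub l
    rw [← hS]
    refine Finset.card_le_card fun x hx => ?_
    have hadj := (hSadj x).1 hx
    refine Finset.mem_filter.2 ⟨?_, hadj⟩
    by_contra hx'
    have := (hout l (mem_verts_of_mem_leaves hl) x hx' hadj).1
    exact hne (ht.eq_leaf_of_root_mem (this ▸ hl))
  have h4 := Finset.card_nsmul_le_sum _ _ _ hdeg
  rw [ht.card_leaves, smul_eq_mul] at h4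
  omega

/-- A vertex set that cannot be split off is spanned by a tree. -/
theorem exists_spanning (hG : Subcubic G) {C : Finset V} {r p : V} (hr : r ∈ C) (hp : p ∉ C)
    (hpr : G.Adj p r)
    (hC : ∀ S ⊆ C, r ∈ S → S ≠ C → ∃ x ∈ S, ∃ y ∈ C, y ∉ S ∧ G.Adj x y) :
    ∃ t : BTree V, t.Valid G ∧ t.verts = C ∧ t.root = r := by
  have grow : ∀ n < C.card, ∃ t : BTree V, t.Valid G ∧ t.verts ⊆ C ∧ t.root = r ∧
      t.verts.card = n + 1 := by
    intro n
    induction n with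
    | zero => exact fun _ => ⟨leaf r, trivial, by simpa [verts] using hr, rfl, by simp [verts]⟩
    | succ n ih =>
      intro hn
      obtain ⟨t, h1, h2, h3, h4⟩ := ih (by omega)
      obtain ⟨x, hx, y, hy, hyt, hxy⟩ := hC t.verts h2 (h3 ▸ t.root_mem_verts) (by
        rintro h
        rw [h] at h4
        omega)
      obtain ⟨t', k1, k2, k3, -⟩ := exists_attach hG (S := leaf y) trivial hxy h1
        (by grind [verts]) hx (p := p) (fun h => hp (h2 h)) (by grind [verts]) (h3 ▸ hpr)
      have hv : t'.verts = insert y t.verts := by ext; grind [verts]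
      refine ⟨t', k1, ?_, k2.trans h3, ?_⟩
      · rw [hv]
        exact Finset.insert_subset hy h2
      · rw [hv, Finset.card_insert_of_notMem hyt, h4]
  have hpos : 0 < C.card := Finset.card_pos.2 ⟨r, hr⟩
  obtain ⟨t, h1, h2, h3, h4⟩ := grow (C.card - 1) (by omega)
  exact ⟨t, h1, Finset.eq_of_subset_of_card_le h2 (by omega), h3⟩

/-! ### From rooted trees to spanning trees -/

theorem Valid.graph_le {t : BTree V} (ht : t.Valid G) : t.graph ≤ G := by
  induction t with
  | leaf v => exact bot_le
  | one v s ih => exact sup_le (ih ht.2.2) ((SimpleGraph.edge_le_iff _).2 (Or.inr ht.1))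
  | two v a b iha ihb =>
    exact sup_le (sup_le (iha ht.2.2.2.2.2.1) ((SimpleGraph.edge_le_iff _).2 (Or.inr ht.1)))
      (sup_le (ihb ht.2.2.2.2.2.2) ((SimpleGraph.edge_le_iff _).2 (Or.inr ht.2.1)))

theorem Valid.reachable_root {t : BTree V} (ht : t.Valid G) {w : V} (hw : w ∈ t.verts) :
    t.graph.Reachable t.root w := by
  have step : ∀ (v : V) (s : BTree V), G.Adj v s.root → ∀ w, s.graph.Reachable s.root w →
      (s.graph ⊔ SimpleGraph.edge v s.root).Reachable v w := by
    intro v s hvs w h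
    have hadj : (s.graph ⊔ SimpleGraph.edge v s.root).Adj v s.root :=
      Or.inr (by simp [SimpleGraph.edge_adj, hvs.ne])
    exact hadj.reachable.trans (h.mono le_sup_left)
  induction t with
  | leaf v => simp only [verts, Finset.mem_singleton] at hw; subst hw; rfl
  | one v s ih =>
    rcases Finset.mem_insert.1 hw with rfl | hw
    · rfl
    · exact step v s ht.1 w (ih ht.2.2 hw)
  | two v a b iha ihb =>
    rcases Finset.mem_insert.1 hw with rfl | hw
    · rfl
    rcases Finset.mem_union.1 hw with hw | hw
    · exact (step v a ht.1 w (iha ht.2.2.2.2.2.1 hw)).mono le_sup_left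
    · exact (step v b ht.2.1 w (ihb ht.2.2.2.2.2.2 hw)).mono le_sup_right

theorem Valid.ncard_edgeSet_lt [Finite V] {t : BTree V} (ht : t.Valid G) :
    t.graph.edgeSet.ncard < t.verts.card := by
  have step : ∀ (H : SimpleGraph V) (v w : V),
      (H ⊔ SimpleGraph.edge v w).edgeSet.ncard ≤ H.edgeSet.ncard + 1 := by
    intro H v w
    have hle : (SimpleGraph.edge v w).edgeSet ⊆ {s(v, w)} := by
      intro e
      induction e with
      | _ x y => simp; tauto
    rw [SimpleGraph.edgeSet_sup]
    refine (Set.ncard_union_le _ _).trans (Nat.add_le_add_left ?_ _)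
    simpa using Set.ncard_le_ncard hle
  induction t with
  | leaf v => simp [graph, verts]
  | one v s ih =>
    have h1 := ih ht.2.2
    have h2 := step s.graph v s.root
    rw [verts, Finset.card_insert_of_notMem ht.2.1]
    simp only [graph]
    omega
  | two v a b iha ihb =>
    obtain ⟨-, -, hna, hnb, hab, ha, hb⟩ := ht
    have h1 := iha ha
    have h2 := ihb hb
    have h3 := step a.graph v a.root
    have h4 := step b.graph v b.root
    have h5 := Set.ncard_union_le (a.graph ⊔ SimpleGraph.edge v a.root).edgeSet
      (b.graph ⊔ SimpleGraph.edge v b.root).edgeSet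
    rw [verts, Finset.card_insert_of_notMem (by simp [hna, hnb]),
      Finset.card_union_of_disjoint (Finset.disjoint_left.2 hab)]
    simp only [graph]
    rw [SimpleGraph.edgeSet_sup]
    omega

theorem Valid.isTree_graph [Fintype V] {t : BTree V} (ht : t.Valid G)
    (hu : t.verts = Finset.univ) : t.graph.IsTree := by
  have hconn : t.graph.Connected := by
    have : Nonempty V := ⟨t.root⟩
    refine ⟨fun x y => ?_⟩
    exact (ht.reachable_root (by simp [hu])).symm.trans (ht.reachable_root (by simp [hu]))
  rw [SimpleGraph.isTree_iff_connected_and_card]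
  refine ⟨hconn, le_antisymm ?_ hconn.card_vert_le_card_edgeSet_add_one⟩
  have := ht.ncard_edgeSet_lt
  rw [hu, Finset.card_univ, ← Nat.card_eq_fintype_card] at this
  rw [Nat.card_coe_set_eq]
  omega

/-- Childful vertices have a child, and a parent as well unless they are the root. -/
theorem Valid.exists_adj {t : BTree V} (ht : t.Valid G) {w : V} (hw : w ∈ t.verts)
    (hl : w ∉ t.leaves) :
    (∃ c ∈ t.verts, t.graph.Adj w c) ∧
      (w ≠ t.root → ∃ c d, c ≠ d ∧ t.graph.Adj w c ∧ t.graph.Adj w d) := by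
  have step : ∀ (v : V) (s : BTree V), G.Adj v s.root → v ∉ s.verts →
      ((∃ c ∈ s.verts, s.graph.Adj w c) ∧
        (w ≠ s.root → ∃ c d, c ≠ d ∧ s.graph.Adj w c ∧ s.graph.Adj w d)) →
      ∃ c d, c ≠ d ∧ (s.graph ⊔ SimpleGraph.edge v s.root).Adj w c ∧
        (s.graph ⊔ SimpleGraph.edge v s.root).Adj w d := by
    rintro v s hvs hv ⟨⟨c, hc, hwc⟩, h⟩
    by_cases hws : w = s.root
    · subst hws
      exact ⟨c, v, fun h => hv (h ▸ hc), Or.inl hwc,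
        Or.inr (by simp [SimpleGraph.edge_adj, hvs.ne'])⟩
    · obtain ⟨c, d, hcd, h1, h2⟩ := h hws
      exact ⟨c, d, hcd, Or.inl h1, Or.inl h2⟩
  have top : ∀ (v : V) (s : BTree V), G.Adj v s.root →
      (s.graph ⊔ SimpleGraph.edge v s.root).Adj v s.root := fun v s hvs =>
    Or.inr (by simp [SimpleGraph.edge_adj, hvs.ne])
  induction t with
  | leaf v => exact absurd hw hl
  | one v s ih =>
    rcases Finset.mem_insert.1 hw with rfl | hw
    · exact ⟨⟨s.root, Finset.mem_insert_of_mem s.root_mem_verts, top w s ht.1⟩,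
        fun h => absurd rfl h⟩
    · have h := ih ht.2.2 hw hl
      obtain ⟨⟨c, hc, hwc⟩, -⟩ := id h
      exact ⟨⟨c, Finset.mem_insert_of_mem hc, Or.inl hwc⟩, fun _ => step v s ht.1 ht.2.1 h⟩
  | two v a b iha ihb =>
    obtain ⟨hva, hvb, hna, hnb, -, ha, hb⟩ := ht
    simp only [leaves, Finset.mem_union, not_or] at hl
    rcases Finset.mem_insert.1 hw with rfl | hw
    · exact ⟨⟨a.root, by simp [verts, a.root_mem_verts], Or.inl (top w a hva)⟩,
        fun h => absurd rfl h⟩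
    rcases Finset.mem_union.1 hw with hw | hw
    · have h := iha ha hw hl.1
      obtain ⟨⟨c, hc, hwc⟩, -⟩ := id h
      obtain ⟨d, e, hde, h1, h2⟩ := step v a hva hna h
      exact ⟨⟨c, by simp [verts, hc], Or.inl (Or.inl hwc)⟩,
        fun _ => ⟨d, e, hde, Or.inl h1, Or.inl h2⟩⟩
    · have h := ihb hb hw hl.2
      obtain ⟨⟨c, hc, hwc⟩, -⟩ := id h
      obtain ⟨d, e, hde, h1, h2⟩ := step v b hvb hnb h
      exact ⟨⟨c, by simp [verts, hc], Or.inr (Or.inl hwc)⟩,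
        fun _ => ⟨d, e, hde, Or.inr h1, Or.inr h2⟩⟩

theorem Valid.leafCount_le [Fintype V] {t : BTree V} (ht : t.Valid G)
    (hu : t.verts = Finset.univ) : leafCount t.graph ≤ t.width + 1 := by
  have hsub : {v | (t.graph.neighborSet v).ncard = 1} ⊆
      ((insert t.root t.leaves : Finset V) : Set V) := by
    intro v hv
    by_contra hv'
    simp only [Finset.coe_insert, Set.mem_insert_iff, Finset.mem_coe, not_or] at hv'
    obtain ⟨c, d, hcd, hc, hd⟩ := (ht.exists_adj (w := v) (by simp [hu]) hv'.2).2 hv'.1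
    obtain ⟨a, ha⟩ := Set.ncard_eq_one.1 hv
    have h1 : c ∈ t.graph.neighborSet v := hc
    have h2 : d ∈ t.graph.neighborSet v := hd
    rw [ha] at h1 h2
    exact hcd (h1.trans h2.symm)
  refine (Set.ncard_le_ncard hsub).trans ?_
  rw [Set.ncard_coe_finset, ← ht.card_leaves]
  exact Finset.card_insert_le _ _

/-- One side of a bridge of a cubic graph has a spanning tree of small width that is rooted at
the end of the bridge. -/
theorem exists_of_bridge (hG : Subcubic G) (hconn : G.Connected)
    (hcub : ∀ v, ∃ S : Finset V, S.card = 3 ∧ ∀ x, x ∈ S ↔ G.Adj v x) {K : Finset V} {u c : V}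
    (hu : u ∈ K) (hc : c ∉ K) (hcu : G.Adj c u)
    (hout : ∀ x ∈ K, ∀ y ∉ K, G.Adj x y → x = u ∧ y = c) :
    ∃ t : BTree V, t.Valid G ∧ t.verts = K ∧ t.root = u ∧ 6 * t.width ≤ K.card + 1 := by
  obtain ⟨t, ht, rfl, rfl⟩ := exists_spanning hG hu hc hcu (by
    intro S hSK huS hne
    obtain ⟨y, hy, hyS⟩ := Finset.exists_of_ssubset (Finset.ssubset_iff_subset_ne.2 ⟨hSK, hne⟩)
    obtain ⟨a, ha, b, hb, hab⟩ := hconn.exists_adj_notMem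
      (A := {z | z ∈ K ∧ z ∉ S}) ⟨hy, hyS⟩ (y := u) (fun h => h.2 huS)
    by_cases hbK : b ∈ K
    · exact ⟨b, by_contra fun h => hb ⟨hbK, h⟩, a, ha.1, ha.2, hab.symm⟩
    · exact absurd ((hout a ha.1 b hbK hab).1 ▸ huS) ha.2)
  obtain ⟨t', ht', hv, hr, ho⟩ := exists_opt hG ht hc hcu
  refine ⟨t', ht', hv, hr, ?_⟩
  rw [← hv] at hc hout ⊢
  rw [← hr] at hcu hout
  exact six_mul_width_le hG ht' ho hc hcu hcub hout

end BTree

/-- A cubic graph with a cut vertex has a bridge. -/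
theorem IsCubic.exists_bridge {V : Type} [Fintype V] {G : SimpleGraph V} (hconn : G.Connected)
    (hcubic : IsCubic G) {c : V} (hc : ¬ (G.induce ({c}ᶜ : Set V)).Connected) :
    ∃ (K : Finset V) (u v : V), u ∈ K ∧ v ∉ K ∧ G.Adj v u ∧
      ∀ x ∈ K, ∀ y ∉ K, G.Adj x y → x = u ∧ y = v := by
  classical
  obtain ⟨p, q, r, hpq, hpr, hqr, hN⟩ := Set.ncard_eq_three.1 (hcubic c)
  have hnbr : ∀ x, G.Adj c x ↔ x = p ∨ x = q ∨ x = r := fun x => by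
    rw [← SimpleGraph.mem_neighborSet, hN]
    simp
  have hpc : p ∈ ({c}ᶜ : Set V) := ((hnbr p).2 (Or.inl rfl)).ne'
  obtain ⟨a, b, hab⟩ : ∃ a b, ¬ (G.induce ({c}ᶜ : Set V)).Reachable a b := by
    by_contra! h
    have : Nonempty ({c}ᶜ : Set V) := ⟨⟨p, hpc⟩⟩
    exact hc ⟨h⟩
  let A : Finset V := Finset.univ.filter fun x =>
    ∃ hx : x ∈ ({c}ᶜ : Set V), (G.induce ({c}ᶜ : Set V)).Reachable a ⟨x, hx⟩
  let B : Finset V := Finset.univ.filter fun x => x ∉ A ∧ x ≠ c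
  have hcA : c ∉ A := by simp [A]
  have hAB : ∀ x ∈ A, ∀ y ∉ A, G.Adj x y → y = c := by
    intro x hx y hy hxy
    by_contra hyc
    obtain ⟨hxc, hx⟩ := (Finset.mem_filter.1 hx).2
    refine hy (Finset.mem_filter.2 ⟨Finset.mem_univ _, hyc, hx.trans ?_⟩)
    exact SimpleGraph.Adj.reachable (G := G.induce ({c}ᶜ : Set V)) (v := ⟨y, hyc⟩) hxy
  have haA : (a : V) ∈ A := Finset.mem_filter.2 ⟨Finset.mem_univ _, a.2, .rfl⟩
  have hbA : (b : V) ∉ A := fun h => hab (Finset.mem_filter.1 h).2.2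
  have hB : ∀ x, x ∈ B ↔ x ∉ A ∧ x ≠ c := fun x => by simp [B]
  have hBA : ∀ x ∈ B, ∀ y ∉ B, G.Adj x y → y = c := by
    intro x hx y hy hxy
    by_contra hyc
    have hyA : y ∈ A := by_contra fun h => hy ((hB y).2 ⟨h, hyc⟩)
    exact ((hB x).1 hx).2 (hAB y hyA x ((hB x).1 hx).1 hxy.symm)
  have hA1 : ∃ x ∈ A, G.Adj c x := by
    obtain ⟨x, hx, y, hy, hxy⟩ := hconn.exists_adj_notMem (A := (A : Set V))
      haA hcA
    exact ⟨x, hx, (hAB x hx y hy hxy ▸ hxy).symm⟩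
  have hB1 : ∃ x ∈ B, G.Adj c x := by
    obtain ⟨x, hx, y, hy, hxy⟩ := hconn.exists_adj_notMem (A := (B : Set V))
      ((hB b).2 ⟨hbA, b.2⟩) (y := c) (fun h => ((hB c).1 h).2 rfl)
    exact ⟨x, hx, (hBA x hx y hy hxy ▸ hxy).symm⟩
  obtain ⟨K, hK, hcK, u, huK, hcu, huniq⟩ : ∃ K : Finset V,
      (∀ x ∈ K, ∀ y ∉ K, G.Adj x y → y = c) ∧ c ∉ K ∧
        ∃ u ∈ K, G.Adj c u ∧ ∀ x ∈ K, G.Adj c x → x = u := by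
    obtain ⟨x, hxA, hx⟩ := hA1
    obtain ⟨y, hyB, hy⟩ := hB1
    by_cases h : ∀ z ∈ A, G.Adj c z → z = x
    · exact ⟨A, hAB, hcA, x, hxA, hx, h⟩
    · refine ⟨B, hBA, by simp [hB], y, hyB, hy, fun w hw hcw => ?_⟩
      push Not at h
      obtain ⟨z, hzA, hz, hzx⟩ := h
      rw [hB] at hw hyB
      rw [hnbr] at hx hy hz hcw
      grind
  refine ⟨K, u, c, huK, hcK, hcu, fun x hx y hy hxy => ?_⟩
  obtain rfl := hK x hx y hy hxy
  exact ⟨huniq x hx hxy.symm, rfl⟩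

theorem stmt_7 {V : Type} [Fintype V] (G : SimpleGraph V)
    (hconn : G.Connected) (hcubic : IsCubic G)
    (hcut : ∃ v : V, ¬ (G.induce ({v}ᶜ : Set V)).Connected) :
    (ml G : ℝ) ≤ (Fintype.card V : ℝ) / 6 + 1 / 3 := by
  classical
  have hcub : ∀ v, ∃ S : Finset V, S.card = 3 ∧ ∀ x, x ∈ S ↔ G.Adj v x := fun v =>
    ⟨(G.neighborSet v).toFinset, by rw [← Set.ncard_eq_toFinset_card']; exact hcubic v, by simp⟩
  have hG : BTree.Subcubic G := by
    intro v a b c d ha hb hc hd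
    by_contra! h
    obtain ⟨S, hS, hSadj⟩ := hcub v
    have hsub : ({a, b, c, d} : Finset V) ⊆ S := by
      intro x hx
      rw [hSadj]
      grind
    have := Finset.card_le_card hsub
    grind
  obtain ⟨c, hc⟩ := hcut
  obtain ⟨K, u, v, hu, hv, hvu, hout⟩ := hcubic.exists_bridge hconn hc
  obtain ⟨s, hs, hsK, rfl, hsw⟩ := BTree.exists_of_bridge hG hconn hcub hu hv hvu hout
  obtain ⟨t, ht, htK, rfl, htw⟩ := BTree.exists_of_bridge hG hconn hcub (K := Kᶜ)
    (Finset.mem_compl.2 hv) (by simpa using hu) hvu.symm (fun x hx y hy hxy =>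
      (hout y (by simpa using hy) x (Finset.mem_compl.1 hx) hxy.symm).symm)
  obtain ⟨l, hl⟩ := Finset.card_pos.1 (hs.card_leaves ▸ s.width_pos)
  obtain ⟨T, -, -, hT, hTv, hTw⟩ := BTree.exists_reroot_join hs hl ht
    (by simp [hsK, htK]) hvu.symm
  have huniv : T.verts = Finset.univ := by
    ext x
    simp [hTv, hsK, htK, em]
  have hle : ml G ≤ leafCount T.graph :=
    Nat.sInf_le ⟨T.graph, hT.graph_le, hT.isTree_graph huniv, rfl⟩
  have hml : ml G ≤ s.width + t.width := hle.trans ((hT.leafCount_le huniv).trans hTw)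
  have hcard := Finset.card_add_card_compl K
  have hfinal : 6 * ml G ≤ Fintype.card V + 2 := by omega
  have : (6 * ml G : ℝ) ≤ Fintype.card V + 2 := by exact_mod_cast hfinal
  linarith
end
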